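/- arXiv:2410.00235 — 11 statements merged into one kernel-verified Lean document; each statement's English description precedes it below -/
import Mathlib

section
/- Let W be a d-dimensional complex vector space with a skew-symmetric bilinear form of rank 2r (possibly degenerate). For 0 ≤ k ≤ d−r, the variety of k-dimensional isotropic subspaces of W is an irreducible projective variety of dimension k(d−k) − k(k−1)/2 + (k−r)(k−r−1)/2, where the last term is zero when k ≤ r. -/
open Module Submodule LinearMap

noncomputable section

variable {V : Type*} [AddCommGroup V] [Module ℂ V]

/-- Perpendicular of a subspace with respect to a bilinear form. -/
def perp (B : V →ₗ[ℂ] V →ₗ[ℂ] ℂ) (W : Submodule ℂ V) : Submodule ℂ V where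
  carrier := {v | ∀ w ∈ W, B v w = 0}
  add_mem' := by
    intro a b ha hb w hw
    simp [map_add, ha w hw, hb w hw]
  zero_mem' := by intro w hw; simp
  smul_mem' := by
    intro c a ha w hw
    simp [map_smul, ha w hw]

@[simp] lemma mem_perp {B : V →ₗ[ℂ] V →ₗ[ℂ] ℂ} {W : Submodule ℂ V} {v : V} :
    v ∈ perp B W ↔ ∀ w ∈ W, B v w = 0 := Iff.rfl

/-- The subquotient W/U for U ≤ W. -/
abbrev SubQuot (W U : Submodule ℂ V) : Type _ := W ⧸ (U.comap W.subtype)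

/-- The endomorphism induced on the subquotient W/U by x. -/
def subQuotMap (x : V →ₗ[ℂ] V) (W U : Submodule ℂ V)
    (hW : ∀ v ∈ W, x v ∈ W) (hU : ∀ v ∈ U, x v ∈ U) :
    SubQuot W U →ₗ[ℂ] SubQuot W U :=
  Submodule.mapQ _ _ (x.restrict hW) (by
    intro a ha
    simp only [Submodule.mem_comap, LinearMap.restrict_apply, Submodule.coe_subtype] at ha ⊢
    exact hU a.1 ha)

/-- The Zariski topology on a complex vector space. -/
def zariski (M : Type*) [AddCommGroup M] [Module ℂ M] : TopologicalSpace M :=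
  TopologicalSpace.generateFrom
    {U | ∃ f : M → ℂ,
      f ∈ Algebra.adjoin ℂ {g : M → ℂ | ∃ φ : M →ₗ[ℂ] ℂ, g = ⇑φ} ∧ U = {x | f x ≠ 0}}

/-- The Grassmannian of k-dimensional subspaces of M. -/
def Grass (M : Type*) [AddCommGroup M] [Module ℂ M] (k : ℕ) : Type _ :=
  {F : Submodule ℂ M // finrank ℂ F = k}

/-- The Zariski topology on the Grassmannian, coinduced from the space of
linearly independent k-tuples with its Zariski topology. -/
instance grassTopology (M : Type*) [AddCommGroup M] [Module ℂ M] (k : ℕ) :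
    TopologicalSpace (Grass M k) :=
  TopologicalSpace.coinduced
    (fun v : {v : Fin k → M // LinearIndependent ℂ v} =>
      (⟨Submodule.span ℂ (Set.range v.1),
        (finrank_span_eq_card v.2).trans (by simp)⟩ : Grass M k))
    (TopologicalSpace.induced Subtype.val (zariski (Fin k → M)))

end


/-! ### Part A: commutative algebra -/

section PartA

open MvPolynomial

lemma dimA_le {A L ι : Type} [CommRing A] [Algebra ℂ A] [Nontrivial A] [Algebra.FiniteType ℂ A]
    [Fintype ι] [CommRing L] [IsDomain L] [Algebra ℂ L] [Algebra (MvPolynomial ι ℂ) L]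
    [IsScalarTower ℂ (MvPolynomial ι ℂ) L] [FaithfulSMul (MvPolynomial ι ℂ) L]
    [Algebra.IsAlgebraic (MvPolynomial ι ℂ) L]
    (f : A →ₐ[ℂ] L) (hf : Function.Injective f) :
    ringKrullDim A ≤ (Fintype.card ι : WithBot ℕ∞) := by
  obtain ⟨s, g, hg, hintg⟩ := exists_integral_inj_algHom_of_fg ℂ A
  have h1 : s ≤ Fintype.card ι := by
    have hb := (IsTranscendenceBasis.mvPolynomial ι ℂ).algebraMap_comp (A := L)
    have hc := hb.cardinalMk_eq_trdeg
    have h2 := trdeg_le_of_injective (f.comp g) (hf.comp hg)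
    rw [MvPolynomial.trdeg_of_isDomain, ← hc] at h2
    simpa using h2
  have h2 : ringKrullDim A ≤ ringKrullDim (MvPolynomial (Fin s) ℂ) := by
    algebraize [g.toRingHom]
    have : Algebra.IsIntegral (MvPolynomial (Fin s) ℂ) A := ⟨hintg⟩
    refine Order.krullDim_le_of_strictMono
      (PrimeSpectrum.comap (algebraMap (MvPolynomial (Fin s) ℂ) A)) ?_
    intro I J hIJ
    exact Ideal.IsIntegral.comap_lt_comap (R := MvPolynomial (Fin s) ℂ) (I := I.asIdeal)
      (J := J.asIdeal) hIJ
  refine h2.trans ?_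
  rw [MvPolynomial.ringKrullDim_of_isNoetherianRing, ringKrullDim_eq_zero_of_field]
  simp only [Nat.card_eq_fintype_card, Fintype.card_fin, zero_add]
  exact_mod_cast h1

end PartA

/-! ### Part B: Zariski topology on vector spaces -/

section PartB

open MvPolynomial Topology TopologicalSpace

noncomputable section

variable {M N : Type*} [AddCommGroup M] [Module ℂ M] [AddCommGroup N] [Module ℂ N]

/-- polynomial functions -/
def Pol (M : Type*) [AddCommGroup M] [Module ℂ M] : Subalgebra ℂ (M → ℂ) :=
  Algebra.adjoin ℂ {g : M → ℂ | ∃ φ : M →ₗ[ℂ] ℂ, g = ⇑φ}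

/-- vector space with Zariski topology -/
def Zar (M : Type*) [AddCommGroup M] [Module ℂ M] : Type _ := M

instance (M : Type*) [AddCommGroup M] [Module ℂ M] : TopologicalSpace (Zar M) := zariski M

lemma pol_lin (φ : M →ₗ[ℂ] ℂ) : (fun x => φ x) ∈ Pol M :=
  Algebra.subset_adjoin ⟨φ, rfl⟩

lemma pol_const (c : ℂ) : (fun _ : M => c) ∈ Pol M := (Pol M).algebraMap_mem c

lemma pol_add {f g : M → ℂ} (hf : f ∈ Pol M) (hg : g ∈ Pol M) : (fun x => f x + g x) ∈ Pol M :=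
  (Pol M).add_mem hf hg

lemma pol_sub {f g : M → ℂ} (hf : f ∈ Pol M) (hg : g ∈ Pol M) : (fun x => f x - g x) ∈ Pol M :=
  (Pol M).sub_mem hf hg

lemma pol_mul {f g : M → ℂ} (hf : f ∈ Pol M) (hg : g ∈ Pol M) : (fun x => f x * g x) ∈ Pol M :=
  (Pol M).mul_mem hf hg

lemma pol_sum {α : Type*} (s : Finset α) {f : α → M → ℂ} (hf : ∀ i ∈ s, f i ∈ Pol M) :
    (fun x => ∑ i ∈ s, f i x) ∈ Pol M := by
  have := (Pol M).sum_mem hf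
  convert this using 1
  ext x; simp

lemma pol_prod {α : Type*} (s : Finset α) {f : α → M → ℂ} (hf : ∀ i ∈ s, f i ∈ Pol M) :
    (fun x => ∏ i ∈ s, f i x) ∈ Pol M := by
  have := (Pol M).prod_mem hf
  convert this using 1
  ext x; simp

lemma pol_det {n : ℕ} {A : M → Matrix (Fin n) (Fin n) ℂ}
    (hA : ∀ i j, (fun x => A x i j) ∈ Pol M) : (fun x => (A x).det) ∈ Pol M := by
  simp_rw [Matrix.det_apply']
  exact pol_sum _ fun σ _ => pol_mul (pol_const _) (pol_prod _ fun i _ => hA _ _)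

lemma pol_adj {n : ℕ} {A : M → Matrix (Fin n) (Fin n) ℂ}
    (hA : ∀ i j, (fun x => A x i j) ∈ Pol M) (i j : Fin n) :
    (fun x => (A x).adjugate i j) ∈ Pol M := by
  simp_rw [Matrix.adjugate_apply]
  refine pol_det fun a b => ?_
  by_cases h : a = j
  · subst h
    simpa using pol_const _
  · simpa [h] using hA a b

/-- Composite of a polynomial function with a map all of whose coordinates are rational. -/
lemma pol_comp_rat {S : Type*} (ι : S → M) (g : S → N)
    (h : ∀ φ : N →ₗ[ℂ] ℂ, ∃ p ∈ Pol M, ∃ q ∈ Pol M, ∀ s, q (ι s) ≠ 0 ∧ φ (g s) = p (ι s) / q (ι s))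
    {f : N → ℂ} (hf : f ∈ Pol N) :
    ∃ p ∈ Pol M, ∃ q ∈ Pol M, ∀ s, q (ι s) ≠ 0 ∧ f (g s) = p (ι s) / q (ι s) := by
  unfold Pol at hf
  induction hf using Algebra.adjoin_induction with
  | mem x hx => obtain ⟨φ, rfl⟩ := hx; exact h φ
  | algebraMap r =>
    exact ⟨_, pol_const r, _, pol_const 1, fun s => ⟨one_ne_zero, by simp⟩⟩
  | add x y _ _ hx hy =>
    obtain ⟨p, hp, q, hq, H⟩ := hx
    obtain ⟨p', hp', q', hq', H'⟩ := hy
    refine ⟨_, pol_add (pol_mul hp hq') (pol_mul hp' hq), _, pol_mul hq hq', fun s => ?_⟩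
    have h1 := (H s).1
    have h2 := (H' s).1
    refine ⟨mul_ne_zero h1 h2, ?_⟩
    simp only [Pi.add_apply, (H s).2, (H' s).2]
    field_simp
  | mul x y _ _ hx hy =>
    obtain ⟨p, hp, q, hq, H⟩ := hx
    obtain ⟨p', hp', q', hq', H'⟩ := hy
    refine ⟨_, pol_mul hp hp', _, pol_mul hq hq', fun s => ?_⟩
    have h1 := (H s).1
    have h2 := (H' s).1
    refine ⟨mul_ne_zero h1 h2, ?_⟩
    simp only [Pi.mul_apply, (H s).2, (H' s).2]
    field_simp

/-- polynomial maps -/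
def PolMap (g : M → N) : Prop := ∀ φ : N →ₗ[ℂ] ℂ, (fun x => φ (g x)) ∈ Pol M

lemma PolMap.comp_pol {g : M → N} (hg : PolMap g) {f : N → ℂ} (hf : f ∈ Pol N) :
    (fun x => f (g x)) ∈ Pol M := by
  unfold Pol at hf
  induction hf using Algebra.adjoin_induction with
  | mem x hx => obtain ⟨φ, rfl⟩ := hx; exact hg φ
  | algebraMap r => exact pol_const r
  | add x y _ _ hx hy => exact pol_add hx hy
  | mul x y _ _ hx hy => exact pol_mul hx hy

lemma polMap_lin (l : M →ₗ[ℂ] N) : PolMap (fun x => l x) := fun φ => pol_lin (φ.comp l)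

lemma PolMap.comp {P : Type*} [AddCommGroup P] [Module ℂ P] {g : N → P} {f : M → N}
    (hg : PolMap g) (hf : PolMap f) : PolMap (fun x => g (f x)) := fun φ => hf.comp_pol (hg φ)

lemma PolMap.add {f g : M → N} (hf : PolMap f) (hg : PolMap g) : PolMap (fun x => f x + g x) := by
  intro φ; simp only [map_add]; exact pol_add (hf φ) (hg φ)

lemma PolMap.smul {f : M → ℂ} {g : M → N} (hf : f ∈ Pol M) (hg : PolMap g) :
    PolMap (fun x => f x • g x) := by
  intro φ; simp only [map_smul, smul_eq_mul]; exact pol_mul hf (hg φ)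

lemma PolMap.pi {n : Type*} [Fintype n] [DecidableEq n] {f : M → n → N}
    (hf : ∀ i, PolMap (fun x => f x i)) : PolMap f := by
  intro φ
  have : (fun x => φ (f x)) = fun x => ∑ i, (φ.comp (LinearMap.single ℂ (fun _ => N) i)) (f x i) := by
    ext x
    simp only [LinearMap.comp_apply, LinearMap.coe_single, ← map_sum]
    rw [Finset.univ_sum_single]
  rw [this]
  exact pol_sum _ fun i _ => hf i _

lemma PolMap.bilin [FiniteDimensional ℂ N] (B : N →ₗ[ℂ] N →ₗ[ℂ] ℂ) {f g : M → N} (hf : PolMap f)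
    (hg : PolMap g) : (fun x => B (f x) (g x)) ∈ Pol M := by
  have b := Module.finBasis ℂ N
  have : (fun x => B (f x) (g x)) = fun x => ∑ i, b.coord i (f x) * B (b i) (g x) := by
    ext x
    conv_lhs => rw [← b.sum_repr (f x)]
    rw [map_sum, LinearMap.sum_apply]
    simp
  rw [this]
  exact pol_sum _ fun i _ => pol_mul (hf _) (hg _)

lemma isOpen_D {f : M → ℂ} (hf : f ∈ Pol M) : IsOpen (X := Zar M) {x : Zar M | f x ≠ 0} :=
  isOpen_generateFrom_of_mem ⟨f, hf, rfl⟩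

/-- rational maps are continuous -/
lemma cont_rat {S : Type*} [TopologicalSpace S] (ι : S → Zar M) (hι : Continuous ι) (g : S → Zar N)
    (h : ∀ φ : N →ₗ[ℂ] ℂ, ∃ p ∈ Pol M, ∃ q ∈ Pol M, ∀ s, q (ι s) ≠ 0 ∧ φ (g s) = p (ι s) / q (ι s)) :
    Continuous g := by
  refine continuous_generateFrom_iff.mpr ?_
  rintro U ⟨f, hf, rfl⟩
  obtain ⟨p, hp, q, hq, H⟩ := pol_comp_rat (M := M) (N := N) ι g h hf
  have : g ⁻¹' {x : Zar N | f x ≠ 0} = ι ⁻¹' {x : Zar M | p x ≠ 0} := by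
    ext s
    simp only [Set.mem_preimage, Set.mem_ofPred_eq, (H s).2]
    simp [(H s).1]
  exact this ▸ (isOpen_D hp).preimage hι

lemma PolMap.continuous {g : M → N} (hg : PolMap g) : Continuous (X := Zar M) (Y := Zar N) g :=
  cont_rat (M := M) (N := N) (S := Zar M) (fun x => x) continuous_id g fun φ =>
    ⟨_, hg φ, _, pol_const 1, fun s => ⟨one_ne_zero, by simp⟩⟩

lemma pol_iff {σ : Type*} [Fintype σ] (Θ : M ≃ₗ[ℂ] (σ → ℂ)) (f : M → ℂ) :
    f ∈ Pol M ↔ ∃ P : MvPolynomial σ ℂ, ∀ x, f x = aeval (Θ x) P := by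
  constructor
  · intro hf
    unfold Pol at hf
    induction hf using Algebra.adjoin_induction with
    | mem x hx =>
      obtain ⟨φ, rfl⟩ := hx
      classical
      refine ⟨∑ i, C (φ (Θ.symm (Pi.single i 1))) * X i, fun x => ?_⟩
      have h1 : x = ∑ i, Θ x i • Θ.symm (Pi.single i 1) := by
        apply Θ.injective
        ext j
        simp [Finset.sum_apply, Pi.single_apply]
      conv_lhs => rw [h1]
      simp [mul_comm]
    | algebraMap r => exact ⟨C r, fun x => by simp⟩
    | add x y _ _ hx hy =>
      obtain ⟨P, hP⟩ := hx
      obtain ⟨Q, hQ⟩ := hy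
      exact ⟨P + Q, fun x => by simp [hP, hQ]⟩
    | mul x y _ _ hx hy =>
      obtain ⟨P, hP⟩ := hx
      obtain ⟨Q, hQ⟩ := hy
      exact ⟨P * Q, fun x => by simp [hP, hQ]⟩
  · rintro ⟨P, hP⟩
    obtain rfl : f = fun x => aeval (Θ x) P := funext hP
    induction P using MvPolynomial.induction_on with
    | C a => simpa using pol_const a
    | add p q hp hq => simpa using pol_add (hp fun _ => rfl) (hq fun _ => rfl)
    | mul_X p i hp =>
      simpa using pol_mul (hp fun _ => rfl) (pol_lin ((LinearMap.proj i).comp Θ.toLinearMap))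

/-- point to spectrum -/
def toSpec {σ : Type*} (Θ : M ≃ₗ[ℂ] (σ → ℂ)) (x : Zar M) : PrimeSpectrum (MvPolynomial σ ℂ) :=
  ⟨RingHom.ker (aeval (R := ℂ) (Θ x) : MvPolynomial σ ℂ →ₐ[ℂ] ℂ), RingHom.ker_isPrime _⟩

lemma toSpec_inducing {σ : Type*} [Fintype σ] (Θ : M ≃ₗ[ℂ] (σ → ℂ)) : IsInducing (toSpec Θ) := by
  constructor
  rw [PrimeSpectrum.isTopologicalBasis_basic_opens.eq_generateFrom, induced_generateFrom_eq]
  change zariski M = _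
  unfold zariski
  congr 1
  ext U
  constructor
  · rintro ⟨f, hf, rfl⟩
    obtain ⟨P, hP⟩ := (pol_iff Θ f).1 hf
    refine ⟨_, ⟨P, rfl⟩, ?_⟩
    ext x
    simp only [Set.mem_preimage, SetLike.mem_coe, PrimeSpectrum.mem_basicOpen, Set.mem_ofPred_eq, hP]
    rfl
  · rintro ⟨_, ⟨P, rfl⟩, rfl⟩
    refine ⟨fun x => aeval (Θ x) P, (pol_iff Θ _).2 ⟨P, fun _ => rfl⟩, ?_⟩
    ext x
    simp only [Set.mem_preimage, SetLike.mem_coe, PrimeSpectrum.mem_basicOpen, Set.mem_ofPred_eq]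
    rfl

lemma zar_basis {σ : Type*} [Fintype σ] (Θ : M ≃ₗ[ℂ] (σ → ℂ)) {U : Set (Zar M)} (hU : IsOpen U)
    {x : Zar M} (hx : x ∈ U) : ∃ P : MvPolynomial σ ℂ, aeval (Θ x) P ≠ 0 ∧
      ∀ y : Zar M, aeval (Θ y) P ≠ 0 → y ∈ U := by
  have hb := PrimeSpectrum.isTopologicalBasis_basic_opens.isInducing (toSpec_inducing Θ)
  obtain ⟨_, ⟨_, ⟨P, rfl⟩, rfl⟩, h1, h2⟩ := hb.exists_subset_of_mem_open hx hU
  exact ⟨P, h1, fun y hy => h2 hy⟩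

instance zar_irred [FiniteDimensional ℂ M] : IrreducibleSpace (Zar M) := by
  let Θ := (Module.finBasis ℂ M).equivFun
  have : Nonempty (Zar M) := ⟨(0 : M)⟩
  have : PreirreducibleSpace (Zar M) := by
    constructor
    rintro U V hU hV ⟨x, -, hx⟩ ⟨y, -, hy⟩
    obtain ⟨P, hP, hPU⟩ := zar_basis Θ hU hx
    obtain ⟨Q, hQ, hQV⟩ := zar_basis Θ hV hy
    have h1 : P ≠ 0 := by rintro rfl; simp at hP
    have h2 : Q ≠ 0 := by rintro rfl; simp at hQ
    have h3 : P * Q ≠ 0 := mul_ne_zero h1 h2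
    obtain ⟨z, hz⟩ : ∃ z : Fin _ → ℂ, aeval (R := ℂ) z (P * Q) ≠ 0 := by
      by_contra! h
      exact h3 (MvPolynomial.funext fun z => by simpa [aeval_eq_eval] using h z)
    rw [map_mul] at hz
    exact ⟨(Θ.symm z : M), trivial, hPU _ (by simpa using left_ne_zero_of_mul hz),
      hQV _ (by simpa using right_ne_zero_of_mul hz)⟩
  exact ⟨‹_›⟩

lemma zar_dim_ge {ι : Type*} [Fintype ι] :
    (Fintype.card ι : WithBot ℕ∞) ≤ topologicalKrullDim (Zar (ι → ℂ)) := by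
  classical
  set n := Fintype.card ι
  let e : ι ≃ Fin n := Fintype.equivFin ι
  let pr (i : ℕ) : (ι → ℂ) →ₗ[ℂ] (ι → ℂ) :=
    LinearMap.pi fun j => if (e j : ℕ) < i then LinearMap.proj j else 0
  let Zs (i : ℕ) : Set (Zar (ι → ℂ)) := {x : ι → ℂ | ∀ j, i ≤ (e j : ℕ) → x j = 0}
  have himg : ∀ i, Zs i = Set.range (fun x : Zar (ι → ℂ) => (pr i x : Zar (ι → ℂ))) := by
    intro i
    ext x
    constructor
    · intro hx
      refine ⟨x, ?_⟩
      funext j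
      change (if (e j : ℕ) < i then LinearMap.proj j else 0 : (ι → ℂ) →ₗ[ℂ] ℂ) x = x j
      split_ifs with h
      · rfl
      · exact (hx j (not_lt.1 h)).symm
    · rintro ⟨y, rfl⟩ j hj
      change (if (e j : ℕ) < i then LinearMap.proj j else 0 : (ι → ℂ) →ₗ[ℂ] ℂ) y = 0
      rw [if_neg (not_lt.2 hj)]; rfl
  have hirr : ∀ i, IsIrreducible (Zs i) := by
    intro i
    rw [himg, ← Set.image_univ]
    exact (IrreducibleSpace.isIrreducible_univ _).image _
      (polMap_lin (pr i)).continuous.continuousOn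
  have hcl : ∀ i, IsClosed (Zs i) := by
    intro i
    have : Zs i = ⋂ j : {j : ι // i ≤ (e j : ℕ)}, {x : Zar (ι → ℂ) | (LinearMap.proj j.1 : (ι → ℂ) →ₗ[ℂ] ℂ) x ≠ 0}ᶜ := by
      ext x
      simp only [Set.mem_iInter, Set.mem_compl_iff, Set.mem_ofPred_eq, not_not, Subtype.forall]
      rfl
    rw [this]
    exact isClosed_iInter fun j => (isOpen_D (pol_lin _)).isClosed_compl
  have hmono : ∀ i j : ℕ, i < j → j ≤ n → Zs i < Zs j := by
    intro i j hij hj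
    refine Set.ssubset_iff_exists.2 ⟨fun x hx l hl => hx l (hij.le.trans hl), ?_⟩
    refine ⟨(Pi.single (e.symm ⟨i, hij.trans_le hj⟩) (1 : ℂ) : ι → ℂ), ?_, ?_⟩
    · intro l hl
      rw [Pi.single_apply, if_neg]
      rintro rfl
      simp at hl; omega
    · intro h
      have := h (e.symm ⟨i, hij.trans_le hj⟩) (by simp)
      simp at this
  refine Order.le_krullDim_iff.2 ⟨⟨n, fun i => ⟨Zs i, hirr i, hcl i⟩, fun i => ?_⟩, rfl⟩
  have := hmono i (i + 1) (by omega) (by omega)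
  change (⟨Zs _, _, _⟩ : IrreducibleCloseds _) < ⟨Zs _, _, _⟩
  simpa [← SetLike.coe_ssubset_coe] using this

end

end PartB

/-! ### Part C: charts on the Grassmannian -/

section PartC

open Topology TopologicalSpace

noncomputable section

variable {W : Type*} [AddCommGroup W] [Module ℂ W] {k : ℕ}

/-- frames -/
def Fr (W : Type*) [AddCommGroup W] [Module ℂ W] (k : ℕ) : Type _ :=
  {v : Fin k → W // LinearIndependent ℂ v}

/-- underlying tuple of a frame -/
def Fr.tup (v : Fr W k) : Zar (Fin k → W) := v.1

instance : TopologicalSpace (Fr W k) :=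
  TopologicalSpace.induced Fr.tup inferInstance

lemma tup_inducing : IsInducing (Fr.tup : Fr W k → Zar (Fin k → W)) := ⟨rfl⟩

/-- span of a frame -/
def frPi (v : Fr W k) : Grass W k :=
  ⟨Submodule.span ℂ (Set.range v.1), (finrank_span_eq_card v.2).trans (by simp)⟩

lemma frPi_surj [FiniteDimensional ℂ W] : Function.Surjective (frPi : Fr W k → Grass W k) := by
  rintro ⟨F, hF⟩
  let b := Module.finBasisOfFinrankEq ℂ F hF
  refine ⟨⟨fun i => (b i : W), ?_⟩, Subtype.ext ?_⟩
  · exact b.linearIndependent.map' F.subtype (Submodule.ker_subtype F)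
  · change Submodule.span ℂ (Set.range fun i => (b i : W)) = F
    have : (Set.range fun i => (b i : W)) = F.subtype '' Set.range b := by
      rw [← Set.range_comp]; rfl
    rw [this, Submodule.span_image, b.span_eq]
    simp

lemma frPi_quot [FiniteDimensional ℂ W] : IsQuotientMap (frPi : Fr W k → Grass W k) :=
  ⟨⟨rfl⟩, frPi_surj⟩

/-- matrix of a tuple -/
def mat (p : W →ₗ[ℂ] (Fin k → ℂ)) (v : Fin k → W) : Matrix (Fin k) (Fin k) ℂ :=
  Matrix.of fun a b => p (v a) b

/-- normalized frame -/
def nf (p : W →ₗ[ℂ] (Fin k → ℂ)) (v : Fin k → W) : Fin k → W :=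
  fun a => ∑ b, (mat p v)⁻¹ a b • v b

/-- chart domain -/
def UU (p : W →ₗ[ℂ] (Fin k → ℂ)) : Set (Grass W k) := {F | ∀ x ∈ F.1, p x = 0 → x = 0}

lemma p_comb (p : W →ₗ[ℂ] (Fin k → ℂ)) (v : Fin k → W) (c : Fin k → ℂ) :
    p (∑ a, c a • v a) = Matrix.vecMul c (mat p v) := by
  ext b
  simp [Matrix.vecMul, dotProduct, mat]

lemma mem_UU_iff (p : W →ₗ[ℂ] (Fin k → ℂ)) (v : Fr W k) :
    frPi v ∈ UU p ↔ (mat p v.1).det ≠ 0 := by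
  constructor
  · intro h hdet
    obtain ⟨c, hc, hc'⟩ := Matrix.exists_vecMul_eq_zero_iff.2 hdet
    have hx := h (∑ a, c a • v.1 a)
      (Submodule.sum_mem _ fun a _ => Submodule.smul_mem _ _ (Submodule.subset_span ⟨a, rfl⟩))
      (by rw [p_comb, hc'])
    exact hc (funext fun a => Fintype.linearIndependent_iff.1 v.2 c hx a)
  · intro hdet x hx hpx
    obtain ⟨c, rfl⟩ := (Submodule.mem_span_range_iff_exists_fun ℂ).1 hx
    rw [p_comb] at hpx
    have : c = 0 := by
      by_contra hc
      exact hdet (Matrix.exists_vecMul_eq_zero_iff.1 ⟨c, hc, hpx⟩)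
    simp [this]

lemma p_nf (p : W →ₗ[ℂ] (Fin k → ℂ)) (v : Fin k → W) (h : (mat p v).det ≠ 0) (a : Fin k) :
    p (nf p v a) = Pi.single a 1 := by
  unfold nf
  rw [p_comb]
  have := Matrix.nonsing_inv_mul (mat p v) (isUnit_iff_ne_zero.2 h)
  have h2 := congrFun this a
  ext b
  have h3 := congrFun h2 b
  rw [Matrix.mul_apply] at h3
  simp only [Matrix.vecMul, dotProduct]
  rw [h3, Matrix.one_apply, Pi.single_apply]
  simp [eq_comm]

lemma nf_mem (p : W →ₗ[ℂ] (Fin k → ℂ)) (v : Fin k → W) (a : Fin k) :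
    nf p v a ∈ Submodule.span ℂ (Set.range v) :=
  Submodule.sum_mem _ fun _ _ => Submodule.smul_mem _ _ (Submodule.subset_span ⟨_, rfl⟩)

lemma UU_unique {p : W →ₗ[ℂ] (Fin k → ℂ)} {F : Grass W k} (hF : F ∈ UU p) {x y : W}
    (hx : x ∈ F.1) (hy : y ∈ F.1) (h : p x = p y) : x = y :=
  sub_eq_zero.1 (hF _ (F.1.sub_mem hx hy) (by simp [h]))

lemma linInd_of_p (p : W →ₗ[ℂ] (Fin k → ℂ)) (w : Fin k → W) (h : ∀ a, p (w a) = Pi.single a 1) :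
    LinearIndependent ℂ w := by
  apply LinearIndependent.of_comp p
  have : p ∘ w = Pi.basisFun ℂ (Fin k) := by
    ext a; simp [h]
  rw [this]
  exact (Pi.basisFun ℂ (Fin k)).linearIndependent

lemma span_eq_of_mem {F : Grass W k} [FiniteDimensional ℂ W] (w : Fr W k) (h : ∀ a, w.1 a ∈ F.1) :
    frPi w = F := by
  apply Subtype.ext
  apply Submodule.eq_of_le_of_finrank_eq
  · exact Submodule.span_le.2 (by rintro _ ⟨a, rfl⟩; exact h a)
  · exact (frPi w).2.trans F.2.symm

variable [FiniteDimensional ℂ W]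

/-- inverse chart -/
def chart (p : W →ₗ[ℂ] (Fin k → ℂ)) (F : UU (k := k) p) : Fr W k :=
  ⟨nf p (Function.surjInv frPi_surj F.1).1, linInd_of_p p _ (p_nf p _
    ((mem_UU_iff p _).1 (by rw [Function.surjInv_eq frPi_surj F.1]; exact F.2)))⟩

lemma chart_mem (p : W →ₗ[ℂ] (Fin k → ℂ)) (F : UU (k := k) p) (a : Fin k) :
    (chart p F).1 a ∈ F.1.1 := by
  have h := nf_mem p (Function.surjInv frPi_surj F.1).1 a
  have h2 : Submodule.span ℂ (Set.range (Function.surjInv frPi_surj F.1).1) = F.1.1 :=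
    congrArg Subtype.val (Function.surjInv_eq frPi_surj F.1)
  rw [h2] at h
  exact h

lemma chart_p (p : W →ₗ[ℂ] (Fin k → ℂ)) (F : UU (k := k) p) (a : Fin k) :
    p ((chart p F).1 a) = Pi.single a 1 :=
  p_nf p _ ((mem_UU_iff p _).1 (by rw [Function.surjInv_eq frPi_surj F.1]; exact F.2)) a

lemma frPi_chart (p : W →ₗ[ℂ] (Fin k → ℂ)) (F : UU (k := k) p) : frPi (chart p F) = F.1 :=
  span_eq_of_mem _ (chart_mem p F)

lemma chart_eq (p : W →ₗ[ℂ] (Fin k → ℂ)) (F : UU (k := k) p) (w : Fin k → W)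
    (hw : ∀ a, w a ∈ F.1.1) (hp : ∀ a, p (w a) = Pi.single a 1) : (chart p F).1 = w := by
  funext a
  exact UU_unique F.2 (chart_mem p F a) (hw a) (by rw [chart_p, hp])

lemma chart_frPi (p : W →ₗ[ℂ] (Fin k → ℂ)) (v : Fr W k) (h : frPi v ∈ UU p) :
    (chart p ⟨frPi v, h⟩).1 = nf p v.1 :=
  chart_eq _ _ _ (nf_mem p v.1) (p_nf p _ ((mem_UU_iff p v).1 h))

lemma pol_mat {M : Type*} [AddCommGroup M] [Module ℂ M] (p : W →ₗ[ℂ] (Fin k → ℂ))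
    {f : M → Fin k → W} (hf : PolMap f) (i j : Fin k) : (fun x => mat p (f x) i j) ∈ Pol M :=
  hf (((LinearMap.proj j).comp p).comp (LinearMap.proj i))

/-- numerators of the coordinates of the normalized frame -/
lemma nf_rat {M : Type*} [AddCommGroup M] [Module ℂ M] (p : W →ₗ[ℂ] (Fin k → ℂ))
    {f : M → Fin k → W} (hf : PolMap f) (φ : (Fin k → W) →ₗ[ℂ] ℂ) :
    ∃ q ∈ Pol M, ∀ x, (mat p (f x)).det ≠ 0 → φ (nf p (f x)) = q x / (mat p (f x)).det := by
  refine ⟨fun x => ∑ a, ∑ b, (mat p (f x)).adjugate a b *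
      (φ.comp ((LinearMap.single ℂ (fun _ => W) a).comp (LinearMap.proj b))) (f x), ?_, ?_⟩
  · exact pol_sum _ fun a _ => pol_sum _ fun b _ => pol_mul (pol_adj (pol_mat p hf) a b) (hf _)
  · intro x hx
    have h1 : nf p (f x) = ∑ a, LinearMap.single ℂ (fun _ => W) a (nf p (f x) a) := by
      simp only [LinearMap.coe_single]
      rw [Finset.univ_sum_single]
    rw [h1, map_sum, Finset.sum_div]
    refine Finset.sum_congr rfl fun a _ => ?_
    unfold nf
    rw [map_sum, map_sum, Finset.sum_div]
    refine Finset.sum_congr rfl fun b _ => ?_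
    rw [map_smul, map_smul, Matrix.inv_def]
    simp only [Matrix.smul_apply, smul_eq_mul, Ring.inverse_eq_inv', LinearMap.comp_apply,
      LinearMap.proj_apply]
    field_simp

lemma polMap_id {M : Type*} [AddCommGroup M] [Module ℂ M] : PolMap (fun x : M => x) :=
  polMap_lin LinearMap.id

lemma UU_open (p : W →ₗ[ℂ] (Fin k → ℂ)) : IsOpen (UU (k := k) p) := by
  rw [← frPi_quot.isOpen_preimage]
  have : frPi ⁻¹' (UU p) = Fr.tup ⁻¹' {v : Zar (Fin k → W) | (mat p v).det ≠ 0} := by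
    ext v
    exact mem_UU_iff p v
  rw [this]
  exact (isOpen_D (pol_det (pol_mat p polMap_id))).preimage tup_inducing.continuous

lemma chart_cont (p : W →ₗ[ℂ] (Fin k → ℂ)) : Continuous (chart (k := k) p) := by
  have hq := frPi_quot.restrictPreimage_isOpen (UU_open (k := k) p)
  rw [hq.continuous_iff, tup_inducing.continuous_iff]
  have hc : Continuous (fun v : (frPi ⁻¹' UU p : Set (Fr W k)) => Fr.tup v.1) :=
    tup_inducing.continuous.comp continuous_subtype_val
  refine cont_rat (M := Fin k → W) (N := Fin k → W)
    (fun v : (frPi ⁻¹' UU p : Set (Fr W k)) => Fr.tup v.1) hc _ fun φ => ?_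
  obtain ⟨q, hq, H⟩ := nf_rat p (polMap_id (M := Fin k → W)) φ
  refine ⟨q, hq, _, pol_det (pol_mat p (polMap_id (M := Fin k → W))), fun s => ?_⟩
  have hs := (mem_UU_iff p s.1).1 s.2
  refine ⟨hs, ?_⟩
  have := H s.1.1 hs
  rw [← chart_frPi p s.1 s.2] at this
  exact this

lemma chart_inducing (p : W →ₗ[ℂ] (Fin k → ℂ)) : IsInducing (chart (k := k) p) := by
  refine IsInducing.of_comp (chart_cont p) frPi_quot.continuous ?_
  have : frPi ∘ chart (k := k) p = Subtype.val := funext fun F => frPi_chart p F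
  rw [this]
  exact IsInducing.subtypeVal

lemma exists_UU (F : Grass W k) : ∃ p : W →ₗ[ℂ] (Fin k → ℂ), F ∈ UU p := by
  let b := Module.finBasisOfFinrankEq ℂ F.1 F.2
  obtain ⟨p, hp⟩ := LinearMap.exists_extend (b.equivFun : F.1 →ₗ[ℂ] (Fin k → ℂ))
  refine ⟨p, fun x hx hpx => ?_⟩
  have := LinearMap.congr_fun hp ⟨x, hx⟩
  simp only [LinearMap.comp_apply, Submodule.subtype_apply, hpx] at this
  have h2 := b.equivFun.injective (this.symm.trans (map_zero _).symm)
  exact congrArg Subtype.val h2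

/-- dimension is bounded locally -/
lemma dim_le_of_cover {X : Type*} [TopologicalSpace X] (n : ℕ)
    (h : ∀ x : X, ∃ U : Set X, IsOpen U ∧ x ∈ U ∧ topologicalKrullDim U ≤ n) :
    topologicalKrullDim X ≤ n := by
  unfold topologicalKrullDim
  refine iSup_le fun l => ?_
  obtain ⟨x, hx⟩ := (l 0).isIrreducible.nonempty
  obtain ⟨U, hU, hxU, hdim⟩ := h x
  refine le_trans ?_ hdim
  have hne : ∀ i, ((l i : Set X) ∩ U).Nonempty := fun i =>
    ⟨x, (l.monotone (Fin.zero_le i) : l 0 ≤ l i) hx, hxU⟩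
  have hirr : ∀ i, IsIrreducible (Subtype.val ⁻¹' (l i : Set X) : Set U) := fun i =>
    ⟨by obtain ⟨y, hy, hyU⟩ := hne i; exact ⟨⟨y, hyU⟩, hy⟩,
      (l i).isIrreducible.isPreirreducible.preimage hU.isOpenEmbedding_subtypeVal⟩
  refine Order.le_krullDim_iff.2 ⟨⟨l.length, fun i => ⟨Subtype.val ⁻¹' (l i : Set X), hirr i,
    (l i).isClosed.preimage continuous_subtype_val⟩, fun i => ?_⟩, rfl⟩
  have hlt : l i.castSucc < l i.succ := l.step i
  change (⟨_, _, _⟩ : IrreducibleCloseds U) < ⟨_, _, _⟩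
  rw [← SetLike.coe_ssubset_coe]
  refine ⟨fun y hy => hlt.le hy, fun hle => ?_⟩
  refine hlt.not_ge ?_
  have h1 : (l i.succ : Set X) ⊆ closure ((l i.succ : Set X) ∩ U) :=
    subset_closure_inter_of_isPreirreducible_of_isOpen (l i.succ).isIrreducible.isPreirreducible
      hU (hne _)
  intro y hy
  refine closure_minimal ?_ (l i.castSucc).isClosed (h1 hy)
  rintro z ⟨hz, hzU⟩
  exact hle (a := ⟨z, hzU⟩) hz

end

end PartC

/-! ### Part D: irreducibility -/

section PartD

open Topology TopologicalSpace

noncomputable section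

variable {W : Type*} [AddCommGroup W] [Module ℂ W]

lemma alt_self {B : W →ₗ[ℂ] W →ₗ[ℂ] ℂ} (hs : ∀ v w : W, B w v = - B v w) (v : W) : B v v = 0 := by
  have := hs v v
  exact self_eq_neg.1 this

/-- transvection -/
def tv (B : W →ₗ[ℂ] W →ₗ[ℂ] ℂ) (a : W) : W →ₗ[ℂ] W :=
  LinearMap.id + (B.flip a).smulRight a

lemma tv_apply (B : W →ₗ[ℂ] W →ₗ[ℂ] ℂ) (a v : W) : tv B a v = v + B v a • a := rfl

lemma tv_iso {B : W →ₗ[ℂ] W →ₗ[ℂ] ℂ} (hs : ∀ v w : W, B w v = - B v w) (a v w : W) :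
    B (tv B a v) (tv B a w) = B v w := by
  simp only [tv_apply, map_add, map_smul, LinearMap.add_apply, LinearMap.smul_apply, smul_eq_mul,
    alt_self hs a, hs w a]
  ring

lemma tv_inj {B : W →ₗ[ℂ] W →ₗ[ℂ] ℂ} (hs : ∀ v w : W, B w v = - B v w) (a : W) :
    Function.Injective (tv B a) := by
  rw [injective_iff_map_eq_zero]
  intro v hv
  have h1 : B (tv B a v) a = 0 := by rw [hv]; simp
  rw [tv_apply] at h1 hv
  simp only [map_add, map_smul, LinearMap.add_apply, LinearMap.smul_apply, alt_self hs a] at h1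
  simp only [smul_zero, add_zero] at h1
  rw [h1] at hv
  simpa using hv

/-- products of transvections -/
def tvs (B : W →ₗ[ℂ] W →ₗ[ℂ] ℂ) : (n : ℕ) → (Fin n → W) → W →ₗ[ℂ] W
  | 0, _ => LinearMap.id
  | n + 1, a => (tvs B n (fun i => a i.succ)).comp (tv B (a 0))

lemma tvs_zero (B : W →ₗ[ℂ] W →ₗ[ℂ] ℂ) (n : ℕ) : tvs B n 0 = LinearMap.id := by
  induction n with
  | zero => rfl
  | succ n ih =>
    change (tvs B n 0).comp (tv B 0) = _
    rw [ih]
    ext v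
    simp [tv_apply]

lemma tvs_iso {B : W →ₗ[ℂ] W →ₗ[ℂ] ℂ} (hs : ∀ v w : W, B w v = - B v w) (n : ℕ) :
    ∀ (a : Fin n → W) (v w : W), B (tvs B n a v) (tvs B n a w) = B v w := by
  induction n with
  | zero => intro a v w; rfl
  | succ n ih => intro a v w; exact (ih _ _ _).trans (tv_iso hs _ _ _)

lemma tvs_inj {B : W →ₗ[ℂ] W →ₗ[ℂ] ℂ} (hs : ∀ v w : W, B w v = - B v w) (n : ℕ) :
    ∀ (a : Fin n → W), Function.Injective (tvs B n a) := by
  induction n with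
  | zero => intro a; exact Function.injective_id
  | succ n ih => intro a; exact (ih _).comp (tv_inj hs _)

variable [FiniteDimensional ℂ W]

lemma tvs_pol {M : Type*} [AddCommGroup M] [Module ℂ M] (B : W →ₗ[ℂ] W →ₗ[ℂ] ℂ) (n : ℕ) :
    ∀ (A : M → Fin n → W) (g : M → W) (_ : ∀ i, PolMap (fun x => A x i)) (_ : PolMap g),
      PolMap (fun x => tvs B n (A x) (g x)) := by
  induction n with
  | zero => intro A g _ hg; exact hg
  | succ n ih =>
    intro A g hA hg
    exact ih (fun x i => A x i.succ) (fun x => tv B (A x 0) (g x)) (fun i => hA _)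
      (PolMap.add hg (PolMap.smul (PolMap.bilin B hg (hA 0)) (hA 0)))

lemma perp_dim {B : W →ₗ[ℂ] W →ₗ[ℂ] ℂ} (hs : ∀ v w : W, B w v = - B v w) (F : Submodule ℂ W) :
    finrank ℂ F + finrank ℂ (perp B F) = finrank ℂ W + finrank ℂ (F ⊓ perp B ⊤ : Submodule ℂ W) := by
  have hr : LinearMap.BilinForm.IsRefl B := by
    intro x y h
    rw [hs, h, neg_zero]
  have h1 : ∀ G : Submodule ℂ W, perp B G = LinearMap.BilinForm.orthogonal B G := by
    intro G
    ext v
    simp only [mem_perp, LinearMap.BilinForm.mem_orthogonal_iff]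
    exact forall₂_congr fun w _ => by rw [hs, neg_eq_zero]
  rw [h1, h1]
  exact LinearMap.BilinForm.finrank_add_finrank_orthogonal hr F

lemma exists_max {B : W →ₗ[ℂ] W →ₗ[ℂ] ℂ} (hs : ∀ v w : W, B w v = - B v w) (F : Submodule ℂ W)
    (hF : F ≤ perp B F) : ∃ M, F ≤ M ∧ perp B M = M := by
  obtain ⟨M, ⟨hFM, hM⟩, hmax⟩ := (wellFounded_gt (α := Submodule ℂ W)).has_min
    {M | F ≤ M ∧ M ≤ perp B M} ⟨F, le_rfl, hF⟩
  refine ⟨M, hFM, le_antisymm ?_ hM⟩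
  intro x hx
  by_contra hxM
  refine hmax (M ⊔ Submodule.span ℂ {x}) ⟨hFM.trans le_sup_left, ?_⟩ ?_
  · intro v hv w hw
    obtain ⟨m, hm, y, hy, rfl⟩ := Submodule.mem_sup.1 hv
    obtain ⟨m', hm', y', hy', rfl⟩ := Submodule.mem_sup.1 hw
    obtain ⟨c, rfl⟩ := Submodule.mem_span_singleton.1 hy
    obtain ⟨c', rfl⟩ := Submodule.mem_span_singleton.1 hy'
    simp [hM hm m' hm', hx m' hm', hs x m, hx m hm, alt_self hs x]
  · refine lt_of_le_of_ne le_sup_left fun h => hxM ?_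
    rw [h]
    exact Submodule.mem_sup_right (Submodule.mem_span_singleton_self x)

lemma max_dim {B : W →ₗ[ℂ] W →ₗ[ℂ] ℂ} (hs : ∀ v w : W, B w v = - B v w) {d r : ℕ}
    (hd : finrank ℂ W = d) (hrank : finrank ℂ (W ⧸ perp B ⊤) = 2 * r) (M : Submodule ℂ W)
    (hM : perp B M = M) : finrank ℂ M = d - r ∧ 2 * r ≤ d := by
  have h1 := perp_dim hs M
  have h2 : M ⊓ perp B ⊤ = perp B ⊤ := by
    refine inf_eq_right.2 fun x hx => ?_
    rw [← hM]
    exact fun w _ => hx w trivial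
  rw [hM, h2] at h1
  have h3 := Submodule.finrank_quotient_add_finrank (perp B ⊤)
  omega

lemma move {B : W →ₗ[ℂ] W →ₗ[ℂ] ℂ} (hs : ∀ v w : W, B w v = - B v w) (M : Submodule ℂ W)
    (hM : perp B M = M) (n : ℕ) : ∀ (M' : Submodule ℂ W) (_ : perp B M' = M')
    (_ : finrank ℂ M ≤ finrank ℂ (M' ⊓ M : Submodule ℂ W) + n),
    ∃ a : Fin n → W, M ≤ M'.map (tvs B n a) := by
  induction n with
  | zero =>
    intro M' hM' hn
    refine ⟨0, ?_⟩
    have : M' ⊓ M = M := Submodule.eq_of_le_of_finrank_le inf_le_right hn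
    rw [tvs_zero, Submodule.map_id]
    exact inf_eq_right.1 this
  | succ n ih =>
    intro M' hM' hn
    by_cases hle : M' ≤ M
    · refine ⟨0, ?_⟩
      rw [tvs_zero, Submodule.map_id]
      intro x hx
      rw [← hM']
      intro w hw
      rw [← hM] at hx
      exact hx w (hle hw)
    obtain ⟨x, hx, hxM⟩ := SetLike.not_le_iff_exists.1 hle
    have : ∃ y ∈ M, B x y ≠ 0 := by
      by_contra! h
      exact hxM (by rw [← hM]; exact h)
    obtain ⟨y, hy, hxy⟩ := this
    obtain ⟨c, hc⟩ := IsAlgClosed.exists_pow_nat_eq (B x y)⁻¹ (n := 2) (by norm_num)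
    set a := c • (y - x)
    have hTx : tv B a x = y := by
      rw [tv_apply]
      simp only [a, map_smul, map_sub, alt_self hs x, sub_zero, smul_smul, smul_eq_mul]
      have : c * B x y * c = 1 := by
        rw [show c * B x y * c = c ^ 2 * B x y by ring, hc, inv_mul_cancel₀ hxy]
      rw [this]; simp
    have hfix : ∀ z ∈ M' ⊓ M, tv B a z = z := by
      rintro z ⟨hz', hz⟩
      rw [tv_apply]
      have h1 : B z x = 0 := by rw [← hM'] at hz'; exact hz' x hx
      have h2 : B z y = 0 := by rw [← hM] at hz; exact hz y hy
      simp [a, h1, h2]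
    have hyM' : y ∉ M' := by
      intro h
      rw [← hM'] at hx
      exact hxy (hx y h)
    have hlt : M' ⊓ M < M'.map (tv B a) ⊓ M := by
      refine SetLike.lt_iff_le_and_exists.2 ⟨?_, y, Submodule.mem_inf.2 ⟨⟨x, hx, hTx⟩, hy⟩,
        fun h => hyM' (Submodule.mem_inf.1 h).1⟩
      intro z hz
      exact ⟨⟨z, hz.1, hfix z hz⟩, hz.2⟩
    have hlt' := Submodule.finrank_lt_finrank_of_lt hlt
    have hself : perp B (M'.map (tv B a)) = M'.map (tv B a) := by
      apply le_antisymm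
      · intro v hv
        obtain ⟨u, rfl⟩ := (LinearMap.injective_iff_surjective.1 (tv_inj hs a)) v
        refine ⟨u, ?_, rfl⟩
        rw [← hM']
        intro w hw
        rw [← tv_iso hs a]
        exact hv _ ⟨w, hw, rfl⟩
      · rintro _ ⟨u, hu, rfl⟩ _ ⟨w, hw, rfl⟩
        rw [tv_iso hs a]
        rw [SetLike.mem_coe, ← hM'] at hu
        exact hu w hw
    obtain ⟨b, hb⟩ := ih _ hself (by omega)
    refine ⟨Fin.cons a b, ?_⟩
    have : tvs B (n + 1) (Fin.cons a b) = (tvs B n b).comp (tv B a) := rfl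
    rw [this, Submodule.map_comp]
    exact hb

lemma linInd_iff {k : ℕ} (v : Fin k → W) :
    LinearIndependent ℂ v ↔ ∃ p : W →ₗ[ℂ] (Fin k → ℂ), (mat p v).det ≠ 0 := by
  constructor
  · intro h
    obtain ⟨p, hp⟩ := exists_UU (frPi ⟨v, h⟩)
    exact ⟨p, (mem_UU_iff p ⟨v, h⟩).1 hp⟩
  · rintro ⟨p, hp⟩
    rw [Fintype.linearIndependent_iff]
    intro c hc
    have h1 := p_comb p v c
    rw [hc, map_zero] at h1
    have : c = 0 := by
      by_contra hc
      exact hp (Matrix.exists_vecMul_eq_zero_iff.1 ⟨c, hc, h1.symm⟩)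
    intro i; simp [this]

lemma linInd_open {k : ℕ} : IsOpen {v : Zar (Fin k → W) | LinearIndependent ℂ (show Fin k → W from v)} := by
  have : {v : Zar (Fin k → W) | LinearIndependent ℂ (show Fin k → W from v)} =
      ⋃ p : W →ₗ[ℂ] (Fin k → ℂ), {v : Zar (Fin k → W) | (mat p v).det ≠ 0} := by
    ext v
    simp only [Set.mem_iUnion, Set.mem_ofPred_eq]
    exact linInd_iff _
  rw [this]
  exact isOpen_iUnion fun p => isOpen_D (pol_det (pol_mat p polMap_id))

/-- the isotropic Grassmannian -/
abbrev IG (B : W →ₗ[ℂ] W →ₗ[ℂ] ℂ) (k : ℕ) : Type _ := {F : Grass W k // F.1 ≤ perp B F.1}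

lemma frPi_iso_iff (B : W →ₗ[ℂ] W →ₗ[ℂ] ℂ) {k : ℕ} (v : Fr W k) :
    (frPi v).1 ≤ perp B (frPi v).1 ↔ ∀ i j, B (v.1 i) (v.1 j) = 0 := by
  constructor
  · intro h i j
    exact h (Submodule.subset_span ⟨i, rfl⟩) _ (Submodule.subset_span ⟨j, rfl⟩)
  · intro h x hx y hy
    obtain ⟨c, rfl⟩ := (Submodule.mem_span_range_iff_exists_fun ℂ).1 hx
    obtain ⟨c', rfl⟩ := (Submodule.mem_span_range_iff_exists_fun ℂ).1 hy
    simp [h]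

lemma closed_iso (B : W →ₗ[ℂ] W →ₗ[ℂ] ℂ) (k : ℕ) :
    IsClosed {F : Grass W k | F.1 ≤ perp B F.1} := by
  rw [← frPi_quot.isClosed_preimage]
  have : frPi ⁻¹' {F : Grass W k | F.1 ≤ perp B F.1} =
      ⋂ i : Fin k, ⋂ j : Fin k, Fr.tup ⁻¹' {v : Zar (Fin k → W) |
        B ((LinearMap.proj i : (Fin k → W) →ₗ[ℂ] W) v) ((LinearMap.proj j : (Fin k → W) →ₗ[ℂ] W) v) ≠ 0}ᶜ := by
    ext v
    simp only [Set.mem_iInter, Set.mem_preimage, Set.mem_compl_iff, Set.mem_ofPred_eq, not_not]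
    exact frPi_iso_iff B v
  rw [this]
  exact isClosed_iInter fun i => isClosed_iInter fun j =>
    ((isOpen_D (PolMap.bilin B (polMap_lin (LinearMap.proj i))
      (polMap_lin (LinearMap.proj j)))).isClosed_compl).preimage tup_inducing.continuous

lemma irred_IG {B : W →ₗ[ℂ] W →ₗ[ℂ] ℂ} (hs : ∀ v w : W, B w v = - B v w) {d r k : ℕ}
    (hd : finrank ℂ W = d) (hrank : finrank ℂ (W ⧸ perp B ⊤) = 2 * r) (hk : k ≤ d - r) :
    IrreducibleSpace (IG B k) := by
  obtain ⟨M0, -, hM0⟩ := exists_max hs ⊥ bot_le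
  let P := (Fin d → W) × (Fin k → M0)
  let S : Set (Zar P) := {x : P | LinearIndependent ℂ x.2}
  have hSopen : IsOpen S := by
    exact (linInd_open (W := M0) (k := k)).preimage
      (polMap_lin (LinearMap.snd ℂ (Fin d → W) (Fin k → M0))).continuous
  have hSne : S.Nonempty := by
    have : k ≤ finrank ℂ M0 := by rw [(max_dim hs hd hrank M0 hM0).1]; exact hk
    let b := Module.finBasis ℂ M0
    exact ⟨((0, fun i => b (Fin.castLE this i)) : P),
      b.linearIndependent.comp _ (Fin.castLE_injective this)⟩
  let g (x : P) : Fin k → W := fun i => tvs B d x.1 (x.2 i)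
  have hg : PolMap g := by
    refine PolMap.pi fun i => tvs_pol B d _ _ (fun j => ?_) ?_
    · exact polMap_lin ((LinearMap.proj j).comp (LinearMap.fst ℂ (Fin d → W) (Fin k → M0)))
    · exact polMap_lin (M0.subtype.comp
        ((LinearMap.proj i).comp (LinearMap.snd ℂ (Fin d → W) (Fin k → M0))))
  have hgl : ∀ x : S, LinearIndependent ℂ (g x.1) := fun x =>
    (LinearIndependent.map' (show LinearIndependent ℂ (x.1 : P).2 from x.2) M0.subtype
      (Submodule.ker_subtype M0)).map' _ (LinearMap.ker_eq_bot.2 (tvs_inj hs d (x.1 : P).1))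
  let G (x : S) : Fr W k := ⟨g x.1, hgl x⟩
  have hG : Continuous G := by
    rw [tup_inducing.continuous_iff]
    exact hg.continuous.comp continuous_subtype_val
  have hiso : ∀ x, (frPi (G x)).1 ≤ perp B (frPi (G x)).1 := by
    intro x
    rw [frPi_iso_iff]
    intro i j
    refine (tvs_iso hs d _ _ _).trans ?_
    have := hM0.ge ((x.1 : P).2 i).2
    exact this _ ((x.1 : P).2 j).2
  let H (x : S) : IG B k := ⟨frPi (G x), hiso x⟩
  have hH : Continuous H := (frPi_quot.continuous.comp hG).subtype_mk _
  have hsurj : Function.Surjective H := by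
    rintro ⟨F, hF⟩
    obtain ⟨M, hFM, hM⟩ := exists_max hs F.1 hF
    obtain ⟨a, ha⟩ := move hs M hM d M0 hM0
      (le_add_left ((Submodule.finrank_le M).trans hd.le))
    obtain ⟨v, rfl⟩ := frPi_surj F
    have h1 : ∀ i, ∃ u : M0, tvs B d a u = v.1 i := fun i => by
      obtain ⟨u, hu, h⟩ := ha (hFM (Submodule.subset_span ⟨i, rfl⟩))
      exact ⟨⟨u, hu⟩, h⟩
    choose u hu using h1
    have hul : LinearIndependent ℂ u := by
      apply LinearIndependent.of_comp ((tvs B d a).comp M0.subtype)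
      convert v.2
      exact funext hu
    refine ⟨⟨((a, u) : P), hul⟩, Subtype.ext ?_⟩
    change frPi _ = frPi _
    congr 1
    exact Subtype.ext (funext hu)
  have hirrS : IsIrreducible S := ⟨hSne, (PreirreducibleSpace.isPreirreducible_univ).open_subset hSopen
    (Set.subset_univ _)⟩
  have : IrreducibleSpace S := by
    exact Subtype.irreducibleSpace hirrS
  have h2 := (IrreducibleSpace.isIrreducible_univ S).image H hH.continuousOn
  rw [Set.image_univ, hsurj.range_eq] at h2
  exact (irreducibleSpace_def _).2 h2

end

end PartD

/-! ### Part E: normal form of the bilinear form -/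

section PartE

noncomputable section

variable {W : Type*} [AddCommGroup W] [Module ℂ W]

/-- hyperbolic systems -/
structure Hyp (B : W →ₗ[ℂ] W →ₗ[ℂ] ℂ) {m : ℕ} (e f : Fin m → W) : Prop where
  ee : ∀ i j, B (e i) (e j) = 0
  ff : ∀ i j, B (f i) (f j) = 0
  ef : ∀ i j, B (e i) (f j) = if i = j then 1 else 0

/-- pairing with f and e -/
def pp (B : W →ₗ[ℂ] W →ₗ[ℂ] ℂ) {m : ℕ} (f : Fin m → W) : W →ₗ[ℂ] (Fin m → ℂ) :=
  LinearMap.pi fun l => B.flip (f l)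

def gg (B : W →ₗ[ℂ] W →ₗ[ℂ] ℂ) {m : ℕ} (e : Fin m → W) : W →ₗ[ℂ] (Fin m → ℂ) :=
  LinearMap.pi fun l => B (e l)

lemma pp_apply (B : W →ₗ[ℂ] W →ₗ[ℂ] ℂ) {m : ℕ} (f : Fin m → W) (w : W) (l : Fin m) :
    pp B f w l = B w (f l) := rfl

lemma gg_apply (B : W →ₗ[ℂ] W →ₗ[ℂ] ℂ) {m : ℕ} (e : Fin m → W) (w : W) (l : Fin m) :
    gg B e w l = B (e l) w := rfl

/-- the hyperbolic component -/
def hc (B : W →ₗ[ℂ] W →ₗ[ℂ] ℂ) {m : ℕ} (e f : Fin m → W) : W →ₗ[ℂ] W :=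
  ∑ l, ((LinearMap.proj l).comp (pp B f)).smulRight (e l) +
  ∑ l, ((LinearMap.proj l).comp (gg B e)).smulRight (f l)

lemma hc_apply (B : W →ₗ[ℂ] W →ₗ[ℂ] ℂ) {m : ℕ} (e f : Fin m → W) (w : W) :
    hc B e f w = ∑ l, B w (f l) • e l + ∑ l, B (e l) w • f l := by
  simp [hc, pp_apply, gg_apply]

/-- the complementary component -/
def qq (B : W →ₗ[ℂ] W →ₗ[ℂ] ℂ) {m : ℕ} (e f : Fin m → W) : W →ₗ[ℂ] W := LinearMap.id - hc B e f

lemma qq_apply (B : W →ₗ[ℂ] W →ₗ[ℂ] ℂ) {m : ℕ} (e f : Fin m → W) (w : W) :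
    qq B e f w = w - (∑ l, B w (f l) • e l + ∑ l, B (e l) w • f l) := by
  rw [← hc_apply]; rfl

variable {B : W →ₗ[ℂ] W →ₗ[ℂ] ℂ} {m : ℕ} {e f : Fin m → W}

lemma Hyp.q_f (h : Hyp B e f) (w : W) (i : Fin m) : B (qq B e f w) (f i) = 0 := by
  simp [qq_apply, h.ff, h.ef]

lemma Hyp.e_q (h : Hyp B e f) (w : W) (i : Fin m) : B (e i) (qq B e f w) = 0 := by
  simp [qq_apply, h.ee, h.ef]

lemma Hyp.q_e (h : Hyp B e f) (hs : ∀ v w : W, B w v = - B v w) (w : W) (i : Fin m) :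
    B (qq B e f w) (e i) = 0 := by
  rw [hs, h.e_q, neg_zero]

lemma Hyp.f_q (h : Hyp B e f) (hs : ∀ v w : W, B w v = - B v w) (w : W) (i : Fin m) :
    B (f i) (qq B e f w) = 0 := by
  rw [hs, h.q_f, neg_zero]

lemma Hyp.formula (h : Hyp B e f) (hs : ∀ v w : W, B w v = - B v w) (w w' : W) :
    B w w' = ∑ l, (pp B f w l * gg B e w' l - gg B e w l * pp B f w' l) +
      B (qq B e f w) (qq B e f w') := by
  have h1 : B (qq B e f w) (qq B e f w') = B (qq B e f w) w' := by
    conv_lhs => rw [qq_apply B e f w']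
    simp [h.q_f, h.q_e hs]
  rw [h1, qq_apply]
  simp only [map_sub, map_add, map_sum, map_smul, LinearMap.sub_apply, LinearMap.add_apply,
    LinearMap.sum_apply, LinearMap.smul_apply, smul_eq_mul, pp_apply, gg_apply,
    Finset.sum_sub_distrib]
  have h2 : ∑ l, B (e l) w * B (f l) w' = - ∑ l, B (e l) w * B w' (f l) := by
    rw [← Finset.sum_neg_distrib]
    exact Finset.sum_congr rfl fun l _ => by rw [hs w' (f l)]; ring
  rw [h2]
  ring

variable [FiniteDimensional ℂ W]

lemma exists_hyp (hs : ∀ v w : W, B w v = - B v w) {r : ℕ}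
    (hrank : finrank ℂ (W ⧸ perp B ⊤) = 2 * r) :
    ∀ m, m ≤ r → ∃ e f : Fin m → W, Hyp B e f := by
  intro m
  induction m with
  | zero => exact fun _ => ⟨Fin.elim0, Fin.elim0, ⟨fun i => i.elim0, fun i => i.elim0, fun i => i.elim0⟩⟩
  | succ m ih =>
    intro hm
    obtain ⟨e, f, h⟩ := ih (by omega)
    have : ∃ w w', B (qq B e f w) (qq B e f w') ≠ 0 := by
      by_contra! hq
      have h1 : LinearMap.ker ((pp B f).prod (gg B e)) ≤ perp B ⊤ := by
        intro w hw w' _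
        replace hw : (pp B f w, gg B e w) = 0 := hw
        rw [Prod.mk_eq_zero] at hw
        rw [h.formula hs, hq, hw.1, hw.2]
        simp
      have h2 := LinearMap.finrank_range_add_finrank_ker ((pp B f).prod (gg B e))
      have h3 := Submodule.finrank_mono h1
      have h4 := Submodule.finrank_le (LinearMap.range ((pp B f).prod (gg B e)))
      have h5 := Submodule.finrank_quotient_add_finrank (perp B ⊤)
      simp only [Module.finrank_prod, Module.finrank_fin_fun] at h4
      omega
    obtain ⟨w, w', hw⟩ := this
    set c := B (qq B e f w) (qq B e f w')
    refine ⟨Fin.cons (qq B e f w) e, Fin.cons (c⁻¹ • qq B e f w') f, ?_, ?_, ?_⟩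
    · intro i j
      refine Fin.cases ?_ (fun i => ?_) i <;> refine Fin.cases ?_ (fun j => ?_) j
      · simp [alt_self hs]
      · simp [h.q_e hs]
      · simp [h.e_q]
      · simp [h.ee]
    · intro i j
      refine Fin.cases ?_ (fun i => ?_) i <;> refine Fin.cases ?_ (fun j => ?_) j
      · simp [alt_self hs]
      · simp [h.q_f]
      · simp [h.f_q hs]
      · simp [h.ff]
    · intro i j
      refine Fin.cases ?_ (fun i => ?_) i <;> refine Fin.cases ?_ (fun j => ?_) j
      · simp [c]; exact inv_mul_cancel₀ hw
      · simp [h.q_f, (Fin.succ_ne_zero _).symm]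
      · simp [h.e_q, Fin.succ_ne_zero]
      · simp [h.ef]

/-- Normal form of a skew form. -/
lemma normal_form (hs : ∀ v w : W, B w v = - B v w) {r : ℕ}
    (hrank : finrank ℂ (W ⧸ perp B ⊤) = 2 * r) (m s n : ℕ) (hm : m ≤ r)
    (hd : finrank ℂ W = 2 * m + s + n) (hc : s = 0 ∨ m = r) :
    ∃ (Φ : W ≃ₗ[ℂ] ((Fin m → ℂ) × (Fin s → ℂ) × (Fin m → ℂ) × (Fin n → ℂ)))
      (β : (Fin n → ℂ) →ₗ[ℂ] (Fin n → ℂ) →ₗ[ℂ] ℂ),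
      (∀ t t', β t' t = - β t t') ∧ (s = 0 ∨ β = 0) ∧
      ∀ w w', B w w' = ∑ l, ((Φ w).1 l * (Φ w').2.2.1 l - (Φ w).2.2.1 l * (Φ w').1 l) +
        β (Φ w).2.2.2 (Φ w').2.2.2 := by
  obtain ⟨e, f, h⟩ := exists_hyp hs hrank m hm
  set pg := (pp B f).prod (gg B e) with hpg
  let Y := LinearMap.ker pg
  have hsurj : Function.Surjective pg := by
    rintro ⟨a, b⟩
    refine ⟨∑ l, a l • e l + ∑ l, b l • f l, ?_⟩
    refine Prod.ext (funext fun i => ?_) (funext fun i => ?_)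
    · change B _ (f i) = a i
      simp [h.ef, h.ff]
    · change B (e i) _ = b i
      simp [h.ef, h.ee]
  have hY : finrank ℂ Y = finrank ℂ ((Fin s → ℂ) × (Fin n → ℂ)) := by
    have h2 := LinearMap.finrank_range_add_finrank_ker pg
    rw [LinearMap.range_eq_top.2 hsurj, finrank_top] at h2
    simp only [Module.finrank_prod, Module.finrank_fin_fun] at h2 ⊢
    change finrank ℂ (LinearMap.ker pg) = _
    omega
  let y := LinearEquiv.ofFinrankEq Y _ hY
  have hqY : ∀ w, qq B e f w ∈ Y := by
    intro w
    change pg _ = 0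
    refine Prod.ext (funext fun i => ?_) (funext fun i => ?_)
    · exact h.q_f w i
    · exact h.e_q w i
  let q : W →ₗ[ℂ] Y := (qq B e f).codRestrict Y hqY
  let yq := y.toLinearMap.comp q
  let Φ0 : W →ₗ[ℂ] ((Fin m → ℂ) × (Fin s → ℂ) × (Fin m → ℂ) × (Fin n → ℂ)) :=
    (pp B f).prod (((LinearMap.fst ℂ _ _).comp yq).prod
      ((gg B e).prod ((LinearMap.snd ℂ _ _).comp yq)))
  have hinj : Function.Injective Φ0 := by
    rw [injective_iff_map_eq_zero]
    intro w hw
    have h1 : pp B f w = 0 := congrArg (fun z => z.1) hw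
    have h2 : (yq w).1 = 0 := congrArg (fun z => z.2.1) hw
    have h3 : gg B e w = 0 := congrArg (fun z => z.2.2.1) hw
    have h4 : (yq w).2 = 0 := congrArg (fun z => z.2.2.2) hw
    have h5 : y (q w) = 0 := Prod.ext h2 h4
    have h6 : q w = 0 := y.map_eq_zero_iff.1 h5
    have h7 : qq B e f w = 0 := congrArg Subtype.val h6
    rw [qq_apply] at h7
    have h8 : ∀ l, B w (f l) = 0 := fun l => congrFun h1 l
    have h9 : ∀ l, B (e l) w = 0 := fun l => congrFun h3 l
    simpa [h8, h9] using h7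
  let Φ := LinearEquiv.ofInjectiveOfFinrankEq Φ0 hinj (by
    simp only [Module.finrank_prod, Module.finrank_fin_fun]; omega)
  let j : (Fin n → ℂ) →ₗ[ℂ] W := Y.subtype.comp (y.symm.toLinearMap.comp (LinearMap.inr ℂ _ _))
  refine ⟨Φ, (B.comp j).compl₂ j, fun t t' => hs _ _, ?_, ?_⟩
  · rcases hc with hc | hc
    · exact Or.inl hc
    right
    have hR : perp B ⊤ = Y := by
      apply Submodule.eq_of_le_of_finrank_eq
      · intro w hw
        change pg w = 0
        refine Prod.ext (funext fun i => ?_) (funext fun i => ?_)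
        · exact hw _ trivial
        · change B (e i) w = 0
          rw [hs, hw _ trivial, neg_zero]
      · have h5 := Submodule.finrank_quotient_add_finrank (perp B ⊤)
        rw [hY]
        simp only [Module.finrank_prod, Module.finrank_fin_fun]
        omega
    refine LinearMap.ext fun t => LinearMap.ext fun t' => ?_
    exact hR.ge (y.symm (0, t)).2 _ trivial
  · intro w w'
    have key : (s = 0 → ∀ w, j (Φ w).2.2.2 = qq B e f w) := by
      intro hs0 w
      have h1 : y.symm (0, (Φ w).2.2.2) = q w := by
        rw [LinearEquiv.symm_apply_eq]
        refine Prod.ext ?_ rfl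
        subst hs0
        exact funext fun i => i.elim0
      exact congrArg Subtype.val h1
    have hform := h.formula hs w w'
    have hlast : B (qq B e f w) (qq B e f w') = B (j (Φ w).2.2.2) (j (Φ w').2.2.2) := by
      rcases hc with hc | hc
      · rw [key hc, key hc]
      have hR : perp B ⊤ = Y := by
        apply Submodule.eq_of_le_of_finrank_eq
        · intro w hw
          change pg w = 0
          refine Prod.ext (funext fun i => ?_) (funext fun i => ?_)
          · exact hw _ trivial
          · change B (e i) w = 0
            rw [hs, hw _ trivial, neg_zero]
        · have h5 := Submodule.finrank_quotient_add_finrank (perp B ⊤)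
          rw [hY]
          simp only [Module.finrank_prod, Module.finrank_fin_fun]
          omega
      rw [hR.ge (hqY w) _ trivial]
      exact (hR.ge (y.symm (0, (Φ w).2.2.2)).2 _ trivial).symm
    rw [hlast] at hform
    exact hform

end

end PartE

/-! ### Part F: parametrization of the big cell -/

section PartF

noncomputable section

variable {W : Type*} [AddCommGroup W] [Module ℂ W] [FiniteDimensional ℂ W]

/-- Parametrization of the isotropic big cell. -/
structure Cell (B : W →ₗ[ℂ] W →ₗ[ℂ] ℂ) (k : ℕ) (ι : Type) where
  p : W →ₗ[ℂ] (Fin k → ℂ)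
  ψ : (ι → ℂ) → Fin k → W
  pol : PolMap ψ
  hp : ∀ x a, p (ψ x a) = Pi.single a 1
  iso : ∀ x a b, B (ψ x a) (ψ x b) = 0
  L : (Fin k → W) →ₗ[ℂ] (ι → ℂ)
  left : ∀ x, L (ψ x) = x
  right : ∀ v : Fin k → W, (∀ a, p (v a) = Pi.single a 1) → (∀ a b, B (v a) (v b) = 0) →
    ψ (L v) = v

lemma exists_cell {B : W →ₗ[ℂ] W →ₗ[ℂ] ℂ} (hs : ∀ v w : W, B w v = - B v w) {r : ℕ}
    (hrank : finrank ℂ (W ⧸ perp B ⊤) = 2 * r) (m s n : ℕ) (hm : m ≤ r)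
    (hd : finrank ℂ W = 2 * m + s + n) (hc : s = 0 ∨ m = r) :
    Nonempty (Cell B (m + s) (Sym2 (Fin m) ⊕ ((Fin m ⊕ Fin s) × Fin n))) := by
  classical
  obtain ⟨Φ, β, hβ, hsβ, hB⟩ := normal_form hs hrank m s n hm hd hc
  let ι := Sym2 (Fin m) ⊕ ((Fin m ⊕ Fin s) × Fin n)
  let E : (Fin m ⊕ Fin s) ≃ Fin (m + s) := finSumFinEquiv
  let t (x : ι → ℂ) (a : Fin m ⊕ Fin s) : Fin n → ℂ := fun j => x (Sum.inr (a, j))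
  let S (x : ι → ℂ) (a : Fin m ⊕ Fin s) (l : Fin m) : ℂ :=
    match a with
    | Sum.inl a => x (Sum.inl s(a, l)) + (1 / 2) * β (t x (Sum.inl a)) (t x (Sum.inl l))
    | Sum.inr b => - β (t x (Sum.inl l)) (t x (Sum.inr b))
  let D1 (a : Fin m ⊕ Fin s) : Fin m → ℂ := fun l => if a = Sum.inl l then 1 else 0
  let D2 (a : Fin m ⊕ Fin s) : Fin s → ℂ := fun l => if a = Sum.inr l then 1 else 0
  let ψ0 (x : ι → ℂ) (a : Fin m ⊕ Fin s) : W := Φ.symm (D1 a, D2 a, S x a, t x a)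
  let p : W →ₗ[ℂ] (Fin (m + s) → ℂ) := LinearMap.pi fun a =>
    match E.symm a with
    | Sum.inl l => (LinearMap.proj l).comp ((LinearMap.fst ℂ _ _).comp Φ.toLinearMap)
    | Sum.inr l => (LinearMap.proj l).comp ((LinearMap.fst ℂ _ _).comp
        ((LinearMap.snd ℂ _ _).comp Φ.toLinearMap))
  have hp1 : ∀ w l, p w (E (Sum.inl l)) = (Φ w).1 l := by
    intro w l
    simp only [p, LinearMap.pi_apply, Equiv.symm_apply_apply]
    rfl
  have hp2 : ∀ w l, p w (E (Sum.inr l)) = (Φ w).2.1 l := by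
    intro w l
    simp only [p, LinearMap.pi_apply, Equiv.symm_apply_apply]
    rfl
  -- the pairing of two normalized vectors
  have hpair : ∀ (a b : Fin m ⊕ Fin s) (w w' : W), (Φ w).1 = D1 a → (Φ w').1 = D1 b →
      B w w' = (match a with
        | Sum.inl a => (Φ w').2.2.1 a
        | Sum.inr _ => 0) - (match b with
        | Sum.inl b => (Φ w).2.2.1 b
        | Sum.inr _ => 0) + β (Φ w).2.2.2 (Φ w').2.2.2 := by
    intro a b w w' h1 h2
    rw [hB, h1, h2, Finset.sum_sub_distrib]
    congr 2
    · rcases a with a | a <;> simp [D1]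
    · rcases b with b | b <;> simp [D1]
  have hdelta : ∀ w (a : Fin m ⊕ Fin s), p w = Pi.single (E a) 1 ↔
      (Φ w).1 = D1 a ∧ (Φ w).2.1 = D2 a := by
    intro w a
    constructor
    · intro h
      refine ⟨funext fun l => ?_, funext fun l => ?_⟩
      · rw [← hp1, h, Pi.single_apply]
        simp only [EmbeddingLike.apply_eq_iff_eq, D1, eq_comm]
      · rw [← hp2, h, Pi.single_apply]
        simp only [EmbeddingLike.apply_eq_iff_eq, D2, eq_comm]
    · rintro ⟨h1, h2⟩
      ext c
      obtain ⟨c, rfl⟩ := E.surjective c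
      rw [Pi.single_apply]
      rcases c with c | c
      · rw [hp1, h1]
        simp only [EmbeddingLike.apply_eq_iff_eq, D1, eq_comm]
      · rw [hp2, h2]
        simp only [EmbeddingLike.apply_eq_iff_eq, D2, eq_comm]
  let L : (Fin (m + s) → W) →ₗ[ℂ] (ι → ℂ) := LinearMap.pi fun z =>
    match z with
    | Sum.inl z => ((1 / 2 : ℂ)) •
        ((LinearMap.proj z.out.2).comp ((LinearMap.fst ℂ _ _).comp ((LinearMap.snd ℂ _ _).comp
          ((LinearMap.snd ℂ _ _).comp (Φ.toLinearMap.comp (LinearMap.proj (E (Sum.inl z.out.1))))))) +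
        (LinearMap.proj z.out.1).comp ((LinearMap.fst ℂ _ _).comp ((LinearMap.snd ℂ _ _).comp
          ((LinearMap.snd ℂ _ _).comp (Φ.toLinearMap.comp (LinearMap.proj (E (Sum.inl z.out.2))))))))
    | Sum.inr (a, j) => (LinearMap.proj j).comp ((LinearMap.snd ℂ _ _).comp ((LinearMap.snd ℂ _ _).comp
          ((LinearMap.snd ℂ _ _).comp (Φ.toLinearMap.comp (LinearMap.proj (E a))))))
  have hL1 : ∀ v a b, L v (Sum.inl s(a, b)) =
      (1 / 2) * ((Φ (v (E (Sum.inl a)))).2.2.1 b + (Φ (v (E (Sum.inl b)))).2.2.1 a) := by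
    intro v a b
    have h1 : L v (Sum.inl s(a, b)) = (1 / 2) * ((Φ (v (E (Sum.inl (s(a, b)).out.1)))).2.2.1 (s(a, b)).out.2
      + (Φ (v (E (Sum.inl (s(a, b)).out.2)))).2.2.1 (s(a, b)).out.1) := rfl
    rw [h1]
    have h2 : s((s(a, b)).out.1, (s(a, b)).out.2) = s(a, b) := Quot.out_eq s(a, b)
    rcases Sym2.eq_iff.1 h2 with ⟨h3, h4⟩ | ⟨h3, h4⟩
    · rw [h3, h4]
    · rw [h3, h4, add_comm]
  have hL2 : ∀ v a j, L v (Sum.inr (a, j)) = (Φ (v (E a))).2.2.2 j := fun v a j => rfl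
  refine ⟨⟨p, fun x c => ψ0 x (E.symm c), ?_, ?_, ?_, L, ?_, ?_⟩⟩
  · refine PolMap.pi fun c => ?_
    have ht : ∀ a, PolMap (fun x => t x a) := fun a =>
      polMap_lin (LinearMap.pi fun j => LinearMap.proj (R := ℂ) (φ := fun _ : ι => ℂ) (Sum.inr (a, j)))
    have hcoord : ∀ z : ι, (fun x : ι → ℂ => x z) ∈ Pol (ι → ℂ) := fun z =>
      pol_lin (LinearMap.proj (R := ℂ) (φ := fun _ : ι => ℂ) z)
    have hS : ∀ a l, (fun x => S x a l) ∈ Pol (ι → ℂ) := by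
      rintro (a | b) l
      · exact pol_add (hcoord _) (pol_mul (pol_const _) (PolMap.bilin β (ht _) (ht _)))
      · have := pol_sub (pol_const 0) (PolMap.bilin β (ht (Sum.inl l)) (ht (Sum.inr b)))
        simpa using this
    have hS' : ∀ a, PolMap (fun x => S x a) := by
      intro a
      refine PolMap.pi fun l => ?_
      intro φ
      have : (fun x => φ (S x a l)) = fun x => φ 1 * S x a l := by
        ext x
        rw [mul_comm, ← smul_eq_mul, ← map_smul]; simp
      rw [this]
      exact pol_mul (pol_const _) (hS a l)
    have hsplit : (fun x => ψ0 x (E.symm c)) = fun x =>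
        Φ.symm (D1 (E.symm c), D2 (E.symm c), 0, 0) +
        ((Φ.symm.toLinearMap.comp ((LinearMap.inr ℂ _ _).comp ((LinearMap.inr ℂ _ _).comp
          (LinearMap.inl ℂ _ _)))) (S x (E.symm c)) +
        (Φ.symm.toLinearMap.comp ((LinearMap.inr ℂ _ _).comp ((LinearMap.inr ℂ _ _).comp
          (LinearMap.inr ℂ _ _)))) (t x (E.symm c))) := by
      ext x
      apply Φ.injective
      simp [ψ0]
    rw [hsplit]
    refine PolMap.add (fun φ => pol_const _) (PolMap.add ?_ ?_)
    · exact PolMap.comp (polMap_lin _) (hS' _)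
    · exact PolMap.comp (polMap_lin _) (ht _)
  · intro x a
    obtain ⟨a, rfl⟩ := E.surjective a
    rw [hdelta]
    simp [ψ0]
  · intro x a b
    rw [hpair (E.symm a) (E.symm b) _ _ (by simp [ψ0]) (by simp [ψ0])]
    generalize E.symm a = a
    generalize E.symm b = b
    rcases a with a | a <;> rcases b with b | b
    · simp only [ψ0, LinearEquiv.apply_symm_apply, S]
      rw [hβ (t x (Sum.inl a)) (t x (Sum.inl b)), Sym2.eq_swap]
      ring
    · simp [ψ0, S]
    · simp only [ψ0, LinearEquiv.apply_symm_apply, S]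
      rw [hβ (t x (Sum.inl b)) (t x (Sum.inr a))]
      ring
    · simp only [ψ0, LinearEquiv.apply_symm_apply]
      rcases hsβ with h | h
      · subst h; exact a.elim0
      · simp [h]
  · intro x
    funext z
    rcases z with z | ⟨a, j⟩
    · induction z using Sym2.ind with
      | _ a b =>
        rw [hL1]
        simp only [Equiv.symm_apply_apply, ψ0, LinearEquiv.apply_symm_apply, S]
        rw [hβ (t x (Sum.inl a)) (t x (Sum.inl b)), Sym2.eq_swap (a := b)]
        ring
    · rw [hL2]
      simp [ψ0, t]
  · intro v hv hiso
    have hD : ∀ a, (Φ (v (E a))).1 = D1 a ∧ (Φ (v (E a))).2.1 = D2 a := fun a =>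
      (hdelta _ a).1 (hv _)
    have ht : ∀ a, t (L v) a = (Φ (v (E a))).2.2.2 := fun a => rfl
    funext c
    obtain ⟨a, rfl⟩ := E.surjective c
    apply Φ.injective
    simp only [Equiv.symm_apply_apply, ψ0, LinearEquiv.apply_symm_apply]
    refine Prod.ext (hD a).1.symm (Prod.ext (hD a).2.symm (Prod.ext (funext fun l => ?_) rfl))
    change S (L v) a l = _
    rcases a with a | b
    · have h1 := hpair (Sum.inl a) (Sum.inl l) _ _ (hD _).1 (hD _).1
      rw [hiso] at h1
      simp only [S, hL1, ht]
      simp only at h1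
      linear_combination (-1 / 2) * h1
    · have h1 := hpair (Sum.inl l) (Sum.inr b) _ _ (hD _).1 (hD _).1
      rw [hiso] at h1
      simp only [S, ht]
      simp only at h1
      linear_combination h1

end

end PartF

/-! ### Part G: dimension -/

section PartG

open MvPolynomial Topology TopologicalSpace

noncomputable section

variable {W : Type*} [AddCommGroup W] [Module ℂ W] [FiniteDimensional ℂ W]
  {B : W →ₗ[ℂ] W →ₗ[ℂ] ℂ} {k : ℕ} {ι : Type} [Fintype ι]

/-- frame attached to a parameter -/
def Cell.fr (c : Cell B k ι) (x : Zar (ι → ℂ)) : Fr W k := ⟨c.ψ x, linInd_of_p c.p _ (c.hp x)⟩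

lemma Cell.fr_cont (c : Cell B k ι) : Continuous c.fr := by
  rw [tup_inducing.continuous_iff]
  exact c.pol.continuous

/-- point attached to a parameter -/
def Cell.pt (c : Cell B k ι) (x : Zar (ι → ℂ)) : IG B k :=
  ⟨frPi (c.fr x), (frPi_iso_iff B _).2 (c.iso x)⟩

lemma Cell.pt_cont (c : Cell B k ι) : Continuous c.pt :=
  (frPi_quot.continuous.comp c.fr_cont).subtype_mk _

lemma Cell.pt_mem (c : Cell B k ι) (x : Zar (ι → ℂ)) : (c.pt x).1 ∈ UU c.p := by
  refine (mem_UU_iff c.p (c.fr x)).2 ?_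
  have : mat c.p (c.fr x).1 = 1 := by
    ext a b
    refine (congrFun (c.hp x a) b).trans ?_
    rw [Pi.single_apply, Matrix.one_apply]
    simp [eq_comm]
  rw [this]; simp

lemma Cell.pt_surj (c : Cell B k ι) (F : IG B k) (hF : F.1 ∈ UU c.p) : ∃ x, c.pt x = F := by
  have h1 := frPi_chart c.p ⟨F.1, hF⟩
  have h2 := F.2
  have h1' : frPi (chart c.p ⟨F.1, hF⟩) = F.1 := h1
  rw [← h1', frPi_iso_iff] at h2
  refine ⟨c.L (chart c.p ⟨F.1, hF⟩).1, Subtype.ext ?_⟩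
  refine Eq.trans ?_ h1'
  change frPi _ = frPi _
  congr 1
  exact Subtype.ext (c.right _ (chart_p c.p ⟨F.1, hF⟩) h2)

/-- chart domain in the isotropic Grassmannian -/
def UI (B : W →ₗ[ℂ] W →ₗ[ℂ] ℂ) (p : W →ₗ[ℂ] (Fin k → ℂ)) : Set (IG B k) := {F | F.1 ∈ UU p}

lemma UI_open (p : W →ₗ[ℂ] (Fin k → ℂ)) : IsOpen (UI B p) :=
  (UU_open p).preimage continuous_subtype_val

/-- coordinates on the chart -/
def ch (p : W →ₗ[ℂ] (Fin k → ℂ)) (F : UI B p) : Zar (Fin k → W) := (chart p ⟨F.1.1, F.2⟩).tup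

lemma ch_inducing (p : W →ₗ[ℂ] (Fin k → ℂ)) : IsInducing (ch (B := B) p) := by
  have h1 : IsInducing (fun F : UI B p => (⟨F.1.1, F.2⟩ : UU p)) := by
    rw [← IsInducing.subtypeVal.of_comp_iff]
    exact IsInducing.comp (f := fun F : UI B p => F.1) (g := fun F : IG B k => F.1)
      IsInducing.subtypeVal IsInducing.subtypeVal
  exact (tup_inducing.comp (chart_inducing p)).comp h1

lemma Cell.pt_inducing (c : Cell B k ι) : IsInducing c.pt := by
  let pv (x : Zar (ι → ℂ)) : UI B c.p := ⟨c.pt x, c.pt_mem x⟩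
  have hpv : Continuous pv := c.pt_cont.subtype_mk _
  let ret (F : UI B c.p) : Zar (ι → ℂ) := c.L (ch c.p F)
  have hret : Continuous ret := (polMap_lin c.L).continuous.comp (ch_inducing c.p).continuous
  have hid : ret ∘ pv = fun x => x := by
    funext x
    have : ch c.p (pv x) = c.ψ x :=
      chart_eq c.p ⟨frPi (c.fr x), c.pt_mem x⟩ (c.ψ x)
        (fun a => Submodule.subset_span ⟨a, rfl⟩) (c.hp x)
    change c.L (ch c.p (pv x)) = x
    rw [this]
    exact c.left x
  have h1 : IsInducing pv := IsInducing.of_comp hpv hret (by rw [hid]; exact IsInducing.id)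
  exact IsInducing.subtypeVal.comp h1

lemma Cell.dim_ge (c : Cell B k ι) :
    (Fintype.card ι : WithBot ℕ∞) ≤ topologicalKrullDim (IG B k) :=
  zar_dim_ge.trans c.pt_inducing.topologicalKrullDim_le

lemma Cell.dim_UI_le (c : Cell B k ι) [IrreducibleSpace (IG B k)] (p : W →ₗ[ℂ] (Fin k → ℂ))
    (hne : (UI B p).Nonempty) :
    topologicalKrullDim (UI B p) ≤ (Fintype.card ι : WithBot ℕ∞) := by
  classical
  let σ := Fin (finrank ℂ (Fin k → W))
  let Θ : (Fin k → W) ≃ₗ[ℂ] (σ → ℂ) := (Module.finBasis ℂ (Fin k → W)).equivFun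
  have hVne : (UI B c.p).Nonempty := ⟨c.pt (0 : ι → ℂ), c.pt_mem _⟩
  -- numerators and denominators
  obtain ⟨Δ, hΔ⟩ := (pol_iff (LinearEquiv.refl ℂ (ι → ℂ)) _).1 (pol_det (pol_mat p c.pol))
  replace hΔ : ∀ x : ι → ℂ, (mat p (c.ψ x)).det = aeval x Δ := hΔ
  have hN : ∀ s : σ, ∃ P : MvPolynomial ι ℂ, ∀ x : ι → ℂ, aeval x Δ ≠ 0 →
      Θ (nf p (c.ψ x)) s = aeval x P / aeval x Δ := by
    intro s
    obtain ⟨q, hq, H⟩ := nf_rat p c.pol ((LinearMap.proj s).comp Θ.toLinearMap)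
    obtain ⟨P, hP⟩ := (pol_iff (LinearEquiv.refl ℂ (ι → ℂ)) _).1 hq
    refine ⟨P, fun x hx => ?_⟩
    have h1 := H x (by rw [hΔ]; exact hx)
    rw [hΔ, hP] at h1
    exact h1
  choose N hN using hN
  have hmem : ∀ x : ι → ℂ, c.pt x ∈ UI B p ↔ aeval x Δ ≠ 0 := by
    intro x
    rw [← hΔ]
    exact mem_UU_iff p (c.fr x)
  have hΔ0 : Δ ≠ 0 := by
    obtain ⟨F, hF, hF'⟩ := nonempty_preirreducible_inter (UI_open p) (UI_open c.p) hne hVne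
    obtain ⟨x, rfl⟩ := c.pt_surj F hF'
    rintro rfl
    exact (hmem x).1 hF (by simp)
  let L := Localization.Away Δ
  have hpow : Submonoid.powers Δ ≤ nonZeroDivisors (MvPolynomial ι ℂ) :=
    powers_le_nonZeroDivisors_of_noZeroDivisors hΔ0
  have : IsDomain L := IsLocalization.isDomain_localization hpow
  have hinjL : Function.Injective (algebraMap (MvPolynomial ι ℂ) L) := IsLocalization.injective L hpow
  have : FaithfulSMul (MvPolynomial ι ℂ) L := (faithfulSMul_iff_algebraMap_injective _ _).2 hinjL
  have : Algebra.IsAlgebraic (MvPolynomial ι ℂ) L := IsLocalization.isAlgebraic L (Submonoid.powers Δ)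
  let h' : MvPolynomial σ ℂ →ₐ[ℂ] L :=
    aeval fun s => IsLocalization.mk' L (N s) (⟨Δ, Submonoid.mem_powers Δ⟩ : Submonoid.powers Δ)
  have hvan1 : ∀ Q, h' Q = 0 → ∀ x : ι → ℂ, aeval x Δ ≠ 0 → aeval (Θ (nf p (c.ψ x))) Q = 0 := by
    intro Q hQ x hx
    let ev : L →+* ℂ := IsLocalization.Away.lift Δ
      (g := (aeval (R := ℂ) x : MvPolynomial ι ℂ →ₐ[ℂ] ℂ).toRingHom) (isUnit_iff_ne_zero.2 hx)
    have hev : ∀ P, ev (algebraMap _ L P) = aeval x P := fun P =>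
      IsLocalization.Away.lift_eq Δ _ P
    have hcomp : ev.comp h'.toRingHom =
        (aeval (R := ℂ) (Θ (nf p (c.ψ x))) : MvPolynomial σ ℂ →ₐ[ℂ] ℂ).toRingHom := by
      apply MvPolynomial.ringHom_ext
      · intro z
        change ev (h' (C z)) = aeval _ (C z)
        have : h' (C z) = algebraMap (MvPolynomial ι ℂ) L (C z) := by
          rw [← MvPolynomial.algebraMap_eq, AlgHom.commutes, ← MvPolynomial.algebraMap_eq,
            ← IsScalarTower.algebraMap_apply]
        rw [this, hev]
        simp
      · intro s
        change ev (h' (X s)) = aeval _ (X s)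
        have h2 : h' (X s) = IsLocalization.mk' L (N s)
            (⟨Δ, Submonoid.mem_powers Δ⟩ : Submonoid.powers Δ) := aeval_X _ _
        have h3 : aeval (Θ (nf p (c.ψ x))) (X s : MvPolynomial σ ℂ) = Θ (nf p (c.ψ x)) s :=
          aeval_X _ _
        rw [h2, h3, hN s x hx, eq_div_iff hx, ← hev, ← hev, ← map_mul]
        congr 1
        exact IsLocalization.mk'_spec L (N s) (⟨Δ, Submonoid.mem_powers Δ⟩ : Submonoid.powers Δ)
    have h1 := RingHom.congr_fun hcomp Q
    change ev (h' Q) = aeval _ Q at h1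
    rw [← h1, hQ, map_zero]
  have hvan : ∀ Q, h' Q = 0 → ∀ F : UI B p, aeval (Θ (ch p F)) Q = 0 := by
    intro Q hQ F
    by_contra hF
    have hO : IsOpen {F : UI B p | aeval (Θ (ch p F)) Q ≠ 0} :=
      (isOpen_D ((pol_iff Θ (fun v => aeval (Θ v) Q)).2 ⟨Q, fun _ => rfl⟩)).preimage
        (ch_inducing p).continuous
    have hO' := (UI_open (B := B) p).isOpenMap_subtype_val _ hO
    obtain ⟨F', ⟨G, hG, rfl⟩, hF'⟩ := nonempty_preirreducible_inter hO' (UI_open c.p)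
      ⟨F.1, F, hF, rfl⟩ hVne
    obtain ⟨x, hx⟩ := c.pt_surj G.1 hF'
    apply hG
    have hG2 : c.pt x ∈ UI B p := by rw [hx]; exact G.2
    have hG' : G = ⟨c.pt x, hG2⟩ := Subtype.ext hx.symm
    have h3 : ch p G = nf p (c.ψ x) := by
      rw [hG']
      exact chart_frPi p (c.fr x) hG2
    rw [h3]
    exact hvan1 Q hQ x ((hmem x).1 hG2)
  let rr := h'.rangeRestrict
  have hrr : Function.Surjective rr := h'.rangeRestrict_surjective
  have hce := PrimeSpectrum.isClosedEmbedding_comap_of_surjective _ (rr : MvPolynomial σ ℂ →+* h'.range) hrr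
  let θ (F : UI B p) : PrimeSpectrum (MvPolynomial σ ℂ) := toSpec Θ (ch p F)
  have hθ : IsInducing θ := (toSpec_inducing Θ).comp (ch_inducing p)
  have hran : ∀ F, ∃ y, PrimeSpectrum.comap (rr : MvPolynomial σ ℂ →+* h'.range) y = θ F := by
    intro F
    have := _root_.range_comap_of_surjective _ (rr : MvPolynomial σ ℂ →+* h'.range) hrr
    change θ F ∈ Set.range _
    rw [this, PrimeSpectrum.mem_zeroLocus]
    intro Q hQ
    refine hvan Q ?_ F
    exact congrArg Subtype.val (show rr Q = 0 from hQ)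
  choose ℓ hℓ using hran
  have hℓi : IsInducing ℓ := by
    rw [← hce.isInducing.of_comp_iff]
    have : PrimeSpectrum.comap (rr : MvPolynomial σ ℂ →+* h'.range) ∘ ℓ = θ := funext hℓ
    rw [this]
    exact hθ
  refine hℓi.topologicalKrullDim_le.trans ?_
  rw [PrimeSpectrum.topologicalKrullDim_eq_ringKrullDim]
  have : Algebra.FiniteType ℂ h'.range := Algebra.FiniteType.of_surjective rr hrr
  exact dimA_le (ι := ι) (L := L) h'.range.val Subtype.val_injective

lemma Cell.dim_eq (c : Cell B k ι) [IrreducibleSpace (IG B k)] :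
    topologicalKrullDim (IG B k) = (Fintype.card ι : WithBot ℕ∞) := by
  refine le_antisymm (dim_le_of_cover _ fun F => ?_) c.dim_ge
  obtain ⟨p, hp⟩ := exists_UU F.1
  exact ⟨UI B p, UI_open p, hp, c.dim_UI_le p ⟨F, hp⟩⟩

lemma choose2_succ (m : ℕ) : (m + 1).choose 2 = m.choose 2 + m := by
  rw [Nat.choose_succ_succ' m 1]; simp [add_comm]

lemma choose2_add (m s : ℕ) : (m + s).choose 2 = m.choose 2 + s.choose 2 + m * s := by
  induction s with
  | zero => simp
  | succ s ih =>
    rw [← add_assoc, choose2_succ, ih, choose2_succ]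
    ring

lemma choose2_sq (m : ℕ) : m * m = 2 * m.choose 2 + m := by
  induction m with
  | zero => rfl
  | succ m ih =>
    rw [choose2_succ]
    linarith

end

end PartG

/-- For a d-dimensional complex vector space W with a (possibly degenerate)
skew-symmetric bilinear form of rank 2r, and 0 ≤ k ≤ d − r, the variety of k-dimensional
isotropic subspaces of W is an irreducible projective (i.e. closed in the Grassmannian)
variety of dimension k(d−k) − k(k−1)/2 + (k−r)(k−r−1)/2 (last term zero when k ≤ r). -/
theorem stmt0 (W : Type*) [AddCommGroup W] [Module ℂ W] [FiniteDimensional ℂ W]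
    (B : W →ₗ[ℂ] W →ₗ[ℂ] ℂ) (hskew : ∀ v w : W, B w v = - B v w)
    (d r k : ℕ) (hd : finrank ℂ W = d)
    (hrank : finrank ℂ (W ⧸ perp B ⊤) = 2 * r)
    (hk : k ≤ d - r) :
    IsClosed {F : Grass W k | F.1 ≤ perp B F.1} ∧
    IrreducibleSpace {F : Grass W k // F.1 ≤ perp B F.1} ∧
    topologicalKrullDim {F : Grass W k // F.1 ≤ perp B F.1} =
      ((k * (d - k) + (k - r) * (k - r - 1) / 2 - k * (k - 1) / 2 : ℕ) : WithBot ℕ∞) := by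

  have hIrr : IrreducibleSpace (IG B k) := irred_IG hskew hd hrank hk
  refine ⟨closed_iso B k, hIrr, ?_⟩
  obtain ⟨M0, -, hM0⟩ := exists_max hskew ⊥ bot_le
  have h2r := (max_dim hskew hd hrank M0 hM0).2
  obtain ⟨m, s, n, hm, hks, hdn, hc, hcase⟩ : ∃ m s n : ℕ, m ≤ r ∧ k = m + s ∧ d = 2 * m + s + n ∧
      (s = 0 ∨ m = r) ∧ k - r = s := by
    rcases le_total k r with h | h
    · exact ⟨k, 0, d - 2 * k, h, by omega, by omega, Or.inl rfl, by omega⟩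
    · exact ⟨r, k - r, d - r - k, le_rfl, by omega, by omega, Or.inr rfl, rfl⟩
  rw [hcase]
  clear hcase
  subst hks
  obtain ⟨c⟩ := exists_cell hskew hrank m s n hm (hd.trans hdn) hc
  refine c.dim_eq.trans ?_
  congr 1
  have h1 : Fintype.card (Sym2 (Fin m) ⊕ ((Fin m ⊕ Fin s) × Fin n)) =
      (m + s) * (d - (m + s)) + s * (s - 1) / 2 - (m + s) * (m + s - 1) / 2 := by
    rw [Fintype.card_sum, Sym2.card, Fintype.card_prod, Fintype.card_sum]
    simp only [Fintype.card_fin]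
    have e1 : d - (m + s) = m + n := by omega
    rw [e1, ← Nat.choose_two_right, ← Nat.choose_two_right]
    rw [choose2_add m s, choose2_succ m]
    have : (m + s) * (m + n) = m * m + m * s + (m + s) * n := by ring
    rw [this, choose2_sq]
    omega
  exact_mod_cast h1
end

section
/- Let V be a complex vector space, 0 ⊆ U ⊆ W ⊆ V subspaces, and x a nilpotent endomorphism of V with x(U) ⊆ U and x(W) ⊆ W. If μ is the Jordan type of the induced map on W/U, then for all i ≥ 1 the length of the i-th column of μ satisfies μ_i^t = dim(x^i(W) ∩ U) + dim(ker(x^i) ∩ W) − dim(x^{i−1}(W) ∩ U) − dim(ker(x^{i−1}) ∩ W). -/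
open Module Submodule LinearMap

theorem aux_rank {M N : Type*} [AddCommGroup M] [Module ℂ M] [FiniteDimensional ℂ M]
    [AddCommGroup N] [Module ℂ N] (f : M →ₗ[ℂ] N) (S : Submodule ℂ M) :
    finrank ℂ ↥(S.map f) + finrank ℂ ↥(LinearMap.ker f ⊓ S) = finrank ℂ S := by
  have h := LinearMap.finrank_range_add_finrank_ker (f.domRestrict S)
  have h1 : LinearMap.range (f.domRestrict S) = S.map f := by
    ext v; simp
  have h2 : (LinearMap.ker (f.domRestrict S)).map S.subtype = LinearMap.ker f ⊓ S := by
    ext v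
    simp [and_comm]
  have h3 := LinearEquiv.finrank_eq
    (Submodule.equivMapOfInjective S.subtype S.injective_subtype (LinearMap.ker (f.domRestrict S)))
  rw [h2] at h3
  rw [h1, h3] at h
  exact h

theorem aux_apply {V : Type*} [AddCommGroup V] [Module ℂ V]
    (U W : Submodule ℂ V) (x : V →ₗ[ℂ] V)
    (hU : ∀ v ∈ U, x v ∈ U) (hW : ∀ v ∈ W, x v ∈ W) (k : ℕ) :
    ∀ w : W, ∃ h : (x ^ k) w.1 ∈ W, ((subQuotMap x W U hW hU) ^ k)
      ((U.comap W.subtype).mkQ w) = (U.comap W.subtype).mkQ ⟨(x ^ k) w.1, h⟩ := by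
  induction k with
  | zero => intro w; exact ⟨by simp, by simp⟩
  | succ k ih =>
    intro w
    obtain ⟨h, e⟩ := ih ⟨x w.1, hW _ w.2⟩
    have h' : (x ^ (k+1)) w.1 = (x ^ k) (x w.1) := by rw [pow_succ]; rfl
    refine ⟨h' ▸ h, ?_⟩
    rw [pow_succ, Module.End.mul_apply]
    simp only [h']
    exact e

theorem aux_key {V : Type*} [AddCommGroup V] [Module ℂ V] [FiniteDimensional ℂ V]
    (U W : Submodule ℂ V) (hUW : U ≤ W) (x : V →ₗ[ℂ] V)
    (hU : ∀ v ∈ U, x v ∈ U) (hW : ∀ v ∈ W, x v ∈ W) (k : ℕ) :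
    finrank ℂ (LinearMap.ker ((subQuotMap x W U hW hU) ^ k)) + finrank ℂ U =
      finrank ℂ ↥(W.map (x ^ k) ⊓ U) + finrank ℂ ↥(LinearMap.ker (x ^ k) ⊓ W) := by
  set y := subQuotMap x W U hW hU with hy
  set q := (U.comap W.subtype).mkQ with hq
  have a1 := aux_rank (x ^ k) (W ⊓ U.comap (x ^ k))
  have e1 : (W ⊓ U.comap (x ^ k)).map (x ^ k) = W.map (x ^ k) ⊓ U := by
    ext v
    simp only [Submodule.mem_map, Submodule.mem_inf, Submodule.mem_comap]
    constructor
    · rintro ⟨w, ⟨h1, h2⟩, rfl⟩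
      exact ⟨⟨w, h1, rfl⟩, h2⟩
    · rintro ⟨⟨w, h1, rfl⟩, h2⟩
      exact ⟨w, ⟨h1, h2⟩, rfl⟩
  have e2 : LinearMap.ker (x ^ k) ⊓ (W ⊓ U.comap (x ^ k)) = LinearMap.ker (x ^ k) ⊓ W := by
    ext v
    simp only [Submodule.mem_inf, LinearMap.mem_ker, Submodule.mem_comap]
    constructor
    · rintro ⟨h1, h2, _⟩
      exact ⟨h1, h2⟩
    · rintro ⟨h1, h2⟩
      exact ⟨h1, h2, h1 ▸ U.zero_mem⟩
  rw [e1, e2] at a1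
  have a2 := aux_rank q ((LinearMap.ker (y ^ k)).comap q)
  have e3 : ((LinearMap.ker (y ^ k)).comap q).map q = LinearMap.ker (y ^ k) :=
    Submodule.map_comap_eq_of_surjective (Submodule.mkQ_surjective _) _
  have e4 : LinearMap.ker q ⊓ (LinearMap.ker (y ^ k)).comap q = U.comap W.subtype := by
    rw [inf_eq_left.mpr, hq, Submodule.ker_mkQ]
    intro v hv
    rw [LinearMap.mem_ker] at hv
    rw [Submodule.mem_comap, hv]
    exact Submodule.zero_mem _
  have e5 : finrank ℂ (U.comap W.subtype) = finrank ℂ U :=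
    (Submodule.comapSubtypeEquivOfLe hUW).finrank_eq
  have e6 : ((LinearMap.ker (y ^ k)).comap q).map W.subtype = W ⊓ U.comap (x ^ k) := by
    ext v
    simp only [Submodule.mem_map, Submodule.mem_inf, Submodule.mem_comap, LinearMap.mem_ker]
    have key : ∀ w : W, (y ^ k) (q w) = 0 ↔ (x ^ k) w.1 ∈ U := by
      intro w
      obtain ⟨h, e⟩ := aux_apply U W x hU hW k w
      rw [hy, hq, e, ← LinearMap.mem_ker, Submodule.ker_mkQ]
      rfl
    constructor
    · rintro ⟨w, h1, rfl⟩
      exact ⟨w.2, (key w).1 h1⟩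
    · rintro ⟨h1, h2⟩
      exact ⟨⟨v, h1⟩, (key ⟨v, h1⟩).2 h2, rfl⟩
  have e7 := LinearEquiv.finrank_eq
    (Submodule.equivMapOfInjective W.subtype W.injective_subtype ((LinearMap.ker (y ^ k)).comap q))
  rw [e6] at e7
  rw [e3, e4, e5, e7] at a2
  rw [a1, a2]

/-- column lengths of the Jordan type of the nilpotent map induced on a
subquotient W/U. Here the i-th column length of the Jordan type of a nilpotent y is
dim ker(y^i) − dim ker(y^{i−1}). -/
theorem stmt1 (V : Type*) [AddCommGroup V] [Module ℂ V] [FiniteDimensional ℂ V]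
    (U W : Submodule ℂ V) (hUW : U ≤ W)
    (x : V →ₗ[ℂ] V) (hnil : IsNilpotent x)
    (hU : ∀ v ∈ U, x v ∈ U) (hW : ∀ v ∈ W, x v ∈ W)
    (i : ℕ) (hi : 1 ≤ i) :
    finrank ℂ (LinearMap.ker ((subQuotMap x W U hW hU) ^ i)) -
        finrank ℂ (LinearMap.ker ((subQuotMap x W U hW hU) ^ (i - 1))) =
      finrank ℂ ↥(W.map (x ^ i) ⊓ U) + finrank ℂ ↥(LinearMap.ker (x ^ i) ⊓ W) -
        finrank ℂ ↥(W.map (x ^ (i - 1)) ⊓ U) - finrank ℂ ↥(LinearMap.ker (x ^ (i - 1)) ⊓ W) := by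
  have h1 := aux_key U W hUW x hU hW i
  have h2 := aux_key U W hUW x hU hW (i - 1)
  omega
end

section
/- Let x be a nilpotent endomorphism of a finite-dimensional vector space V and F ⊆ ker(x) a subspace. Set a_j = dim(F ∩ Im(x^j)) for j ≥ 0. Then the Jordan type of the induced map on V/F is obtained from the Jordan type of x by removing (a_{j−1} − a_j) boxes from the bottom of column j for every j ≥ 1; equivalently, the j-th column length of J(x|_{V/F}) equals that of J(x) minus (a_{j−1} − a_j}. Moreover these removed boxes form a vertical strip: no two are in the same row. -/
open Module Submodule LinearMap

theorem finrank_comap_aux {V W : Type*} [AddCommGroup V] [Module ℂ V] [FiniteDimensional ℂ V]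
    [AddCommGroup W] [Module ℂ W] (f : V →ₗ[ℂ] W) (U : Submodule ℂ W) :
    finrank ℂ (U.comap f) = finrank ℂ (LinearMap.ker f) +
      finrank ℂ ↥(U ⊓ LinearMap.range f) := by
  have h := LinearMap.finrank_range_add_finrank_ker (f.domRestrict (U.comap f))
  have h1 : LinearMap.range (f.domRestrict (U.comap f)) = U ⊓ LinearMap.range f := by
    rw [LinearMap.range_domRestrict, Submodule.map_comap_eq, inf_comm]
  have h2 : finrank ℂ (LinearMap.ker (f.domRestrict (U.comap f))) =
      finrank ℂ (LinearMap.ker f) := by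
    rw [LinearMap.ker_domRestrict]
    exact (Submodule.comapSubtypeEquivOfLe (fun v hv => by
      simp only [LinearMap.mem_ker] at hv
      simp [hv])).finrank_eq
  rw [h1, h2] at h
  omega

/-- for a nilpotent x and F ⊆ ker x, with a_j = dim(F ∩ Im(x^j)), the Jordan
type of the induced map on V/F is obtained from that of x by removing a_{j−1} − a_j boxes
from the bottom of column j, and the removed boxes form a vertical strip. Column lengths
of the Jordan type of a nilpotent y are dim ker(y^j) − dim ker(y^{j−1}). -/
theorem stmt2 (V : Type*) [AddCommGroup V] [Module ℂ V] [FiniteDimensional ℂ V]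
    (x : V →ₗ[ℂ] V) (hnil : IsNilpotent x)
    (F : Submodule ℂ V) (hF : F ≤ LinearMap.ker x)
    (a : ℕ → ℕ) (ha : ∀ j, a j = finrank ℂ ↥(F ⊓ LinearMap.range (x ^ j)))
    (hinv : F ≤ F.comap x) :
    (∀ j : ℕ, 1 ≤ j →
      finrank ℂ (LinearMap.ker ((Submodule.mapQ F F x hinv) ^ j)) -
          finrank ℂ (LinearMap.ker ((Submodule.mapQ F F x hinv) ^ (j - 1))) =
        (finrank ℂ (LinearMap.ker (x ^ j)) - finrank ℂ (LinearMap.ker (x ^ (j - 1)))) -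
          (a (j - 1) - a j)) ∧
    -- vertical strip: no two removed boxes in the same row
    (∀ j : ℕ, 1 ≤ j →
      finrank ℂ (LinearMap.ker (x ^ (j + 1))) - finrank ℂ (LinearMap.ker (x ^ j)) ≤
        finrank ℂ (LinearMap.ker ((Submodule.mapQ F F x hinv) ^ j)) -
          finrank ℂ (LinearMap.ker ((Submodule.mapQ F F x hinv) ^ (j - 1)))) := by
  have hK : ∀ j, finrank ℂ F + finrank ℂ (LinearMap.ker ((Submodule.mapQ F F x hinv) ^ j)) =
      finrank ℂ (LinearMap.ker (x ^ j)) + a j := by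
    intro j
    have h1 := finrank_comap_aux F.mkQ (LinearMap.ker ((Submodule.mapQ F F x hinv) ^ j))
    have h2 := finrank_comap_aux (x ^ j) F
    have h3 : (LinearMap.ker ((Submodule.mapQ F F x hinv) ^ j)).comap F.mkQ =
        F.comap (x ^ j) := by
      rw [← Submodule.mapQ_pow F hinv j]
      ext v
      simp
    rw [h3, Submodule.range_mkQ, inf_top_eq, Submodule.ker_mkQ] at h1
    rw [ha]
    omega
  have hb : ∀ j, finrank ℂ (LinearMap.ker (x ^ (j + 1))) = finrank ℂ (LinearMap.ker (x ^ j)) +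
      finrank ℂ ↥(LinearMap.ker x ⊓ LinearMap.range (x ^ j)) := by
    intro j
    rw [← finrank_comap_aux, pow_succ']
    rfl
  have hr : ∀ j, LinearMap.range (x ^ (j + 1)) ≤ LinearMap.range (x ^ j) := by
    rintro j _ ⟨v, rfl⟩
    exact ⟨x v, by rw [pow_succ]; rfl⟩
  have hanti : ∀ j, a (j + 1) ≤ a j := by
    intro j
    rw [ha, ha]
    exact Submodule.finrank_mono (inf_le_inf_left _ (hr j))
  have hmono : ∀ j, finrank ℂ (LinearMap.ker ((Submodule.mapQ F F x hinv) ^ j)) ≤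
      finrank ℂ (LinearMap.ker ((Submodule.mapQ F F x hinv) ^ (j + 1))) := by
    intro j
    apply Submodule.finrank_mono
    intro v hv
    rw [LinearMap.mem_ker] at hv ⊢
    rw [pow_succ', Module.End.mul_apply, hv, map_zero]
  have hs : ∀ j, a j + finrank ℂ ↥(LinearMap.ker x ⊓ LinearMap.range (x ^ (j + 1))) ≤
      finrank ℂ ↥(LinearMap.ker x ⊓ LinearMap.range (x ^ j)) + a (j + 1) := by
    intro j
    have h := Submodule.finrank_sup_add_finrank_inf_eq (F ⊓ LinearMap.range (x ^ j))
      (LinearMap.ker x ⊓ LinearMap.range (x ^ (j + 1)))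
    have h1 : (F ⊓ LinearMap.range (x ^ j)) ⊓
        (LinearMap.ker x ⊓ LinearMap.range (x ^ (j + 1))) =
        F ⊓ LinearMap.range (x ^ (j + 1)) := by
      rw [inf_inf_inf_comm, inf_eq_left.mpr hF, inf_eq_right.mpr (hr j)]
    have h2 : finrank ℂ ↥((F ⊓ LinearMap.range (x ^ j)) ⊔
        (LinearMap.ker x ⊓ LinearMap.range (x ^ (j + 1)))) ≤
        finrank ℂ ↥(LinearMap.ker x ⊓ LinearMap.range (x ^ j)) :=
      Submodule.finrank_mono (sup_le (inf_le_inf_right _ hF) (inf_le_inf_left _ (hr j)))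
    rw [h1, ← ha, ← ha] at h
    omega
  constructor
  · intro j hj
    obtain ⟨i, rfl⟩ : ∃ i, j = i + 1 := ⟨j - 1, by omega⟩
    rw [Nat.add_sub_cancel]
    have := hK i
    have := hK (i + 1)
    have := hb i
    have := hanti i
    have := hmono i
    omega
  · intro j hj
    obtain ⟨i, rfl⟩ : ∃ i, j = i + 1 := ⟨j - 1, by omega⟩
    rw [Nat.add_sub_cancel]
    have := hK i
    have := hK (i + 1)
    have := hb i
    have := hb (i + 1)
    have := hs i
    omega
end

section
/- Let x be a nilpotent endomorphism of a finite-dimensional vector space V and F a subspace with Im(x) ⊆ F. Set b_j = dim(F + ker(x^j)) for j ≥ 0. Then the Jordan type of x restricted to F is obtained from the Jordan type of x by removing (b_j − b_{j−1}) boxes from the bottom of column j for every j ≥ 1, and the removed boxes form a vertical strip. -/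
open Module Submodule LinearMap

lemma aux_finrank_range_inf (V : Type*) [AddCommGroup V] [Module ℂ V] [FiniteDimensional ℂ V]
    (x : V →ₗ[ℂ] V) (n : ℕ) :
    finrank ℂ ↥(LinearMap.range x ⊓ LinearMap.ker (x ^ n)) + finrank ℂ (LinearMap.ker x) =
      finrank ℂ (LinearMap.ker (x ^ (n + 1))) := by
  have h := LinearMap.finrank_range_add_finrank_ker (x.domRestrict (LinearMap.ker (x ^ (n + 1))))
  have h1 : LinearMap.range (x.domRestrict (LinearMap.ker (x ^ (n + 1)))) =
      LinearMap.range x ⊓ LinearMap.ker (x ^ n) := by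
    ext v
    constructor
    · rintro ⟨⟨w, hw⟩, rfl⟩
      refine ⟨⟨w, rfl⟩, ?_⟩
      simpa [pow_succ] using hw
    · rintro ⟨⟨w, rfl⟩, hw⟩
      refine ⟨⟨w, ?_⟩, rfl⟩
      simpa [pow_succ] using hw
  have hle : LinearMap.ker x ≤ LinearMap.ker (x ^ (n + 1)) := by
    intro v hv
    simp only [LinearMap.mem_ker] at hv ⊢
    simp [pow_succ, hv]
  have h2 : LinearMap.ker (x.domRestrict (LinearMap.ker (x ^ (n + 1)))) =
      (LinearMap.ker x).comap (LinearMap.ker (x ^ (n + 1))).subtype := by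
    ext v
    simp
  rw [h1, h2, (Submodule.comapSubtypeEquivOfLe hle).finrank_eq] at h
  exact h

lemma aux_restrict_pow (V : Type*) [AddCommGroup V] [Module ℂ V]
    (x : V →ₗ[ℂ] V) (F : Submodule ℂ V) (hinv : ∀ v ∈ F, x v ∈ F) (n : ℕ) (v : F) :
    (((x.restrict hinv) ^ n) v : V) = (x ^ n) v := by
  induction n generalizing v with
  | zero => simp
  | succ k ih => simp [pow_succ, ih]

lemma aux_finrank_ker_restrict (V : Type*) [AddCommGroup V] [Module ℂ V]
    (x : V →ₗ[ℂ] V) (F : Submodule ℂ V) (hinv : ∀ v ∈ F, x v ∈ F) (n : ℕ) :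
    finrank ℂ (LinearMap.ker ((x.restrict hinv) ^ n)) =
      finrank ℂ ↥(F ⊓ LinearMap.ker (x ^ n)) := by
  have h2 : LinearMap.ker ((x.restrict hinv) ^ n) =
      (F ⊓ LinearMap.ker (x ^ n)).comap F.subtype := by
    ext v
    simp [← aux_restrict_pow V x F hinv n v]
  rw [h2, (Submodule.comapSubtypeEquivOfLe inf_le_left).finrank_eq]

lemma aux_ker_mono (V : Type*) [AddCommGroup V] [Module ℂ V]
    (x : V →ₗ[ℂ] V) (n : ℕ) : LinearMap.ker (x ^ n) ≤ LinearMap.ker (x ^ (n + 1)) := by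
  intro v hv
  simp only [LinearMap.mem_ker] at hv ⊢
  simp [pow_succ', hv]

/-- for a nilpotent x and Im(x) ⊆ F, with b_j = dim(F + ker(x^j)), the Jordan
type of x|_F is obtained from that of x by removing b_j − b_{j−1} boxes from the bottom of
column j, and the removed boxes form a vertical strip. -/
theorem stmt3 (V : Type*) [AddCommGroup V] [Module ℂ V] [FiniteDimensional ℂ V]
    (x : V →ₗ[ℂ] V) (hnil : IsNilpotent x)
    (F : Submodule ℂ V) (hF : LinearMap.range x ≤ F)
    (b : ℕ → ℕ) (hb : ∀ j, b j = finrank ℂ ↥(F ⊔ LinearMap.ker (x ^ j)))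
    (hinv : ∀ v ∈ F, x v ∈ F) :
    (∀ j : ℕ, 1 ≤ j →
      finrank ℂ (LinearMap.ker ((x.restrict hinv) ^ j)) -
          finrank ℂ (LinearMap.ker ((x.restrict hinv) ^ (j - 1))) =
        (finrank ℂ (LinearMap.ker (x ^ j)) - finrank ℂ (LinearMap.ker (x ^ (j - 1)))) -
          (b j - b (j - 1))) ∧
    -- vertical strip: no two removed boxes in the same row
    (∀ j : ℕ, 1 ≤ j →
      finrank ℂ (LinearMap.ker (x ^ (j + 1))) - finrank ℂ (LinearMap.ker (x ^ j)) ≤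
        finrank ℂ (LinearMap.ker ((x.restrict hinv) ^ j)) -
          finrank ℂ (LinearMap.ker ((x.restrict hinv) ^ (j - 1)))) := by
  have hk := fun n => aux_finrank_ker_restrict V x F hinv n
  have hs := fun n => Submodule.finrank_sup_add_finrank_inf_eq F (LinearMap.ker (x ^ n))
  have hm := fun n => aux_ker_mono V x n
  have hr := fun n => aux_finrank_range_inf V x n
  refine ⟨?_, ?_⟩
  · rintro (_ | i) hj
    · omega
    rw [show i + 1 - 1 = i from rfl]
    simp only [hk, hb]
    have h1 := hs i
    have h2 := hs (i + 1)
    have h3 := Submodule.finrank_mono (hm i)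
    have h4 := Submodule.finrank_mono (sup_le_sup_left (hm i) F)
    have h5 := Submodule.finrank_mono (inf_le_inf_left F (hm i))
    omega
  · rintro (_ | i) hj
    · omega
    rw [show i + 1 - 1 = i from rfl]
    simp only [hk]
    have h1 := hr i
    have h2 := hr (i + 1)
    have h5 := Submodule.finrank_mono (inf_le_inf_left F (hm i))
    have h6 := Submodule.finrank_sup_add_finrank_inf_eq
      (LinearMap.range x ⊓ LinearMap.ker (x ^ (i + 1))) (F ⊓ LinearMap.ker (x ^ i))
    have h7 : (LinearMap.range x ⊓ LinearMap.ker (x ^ (i + 1))) ⊓ (F ⊓ LinearMap.ker (x ^ i)) =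
        LinearMap.range x ⊓ LinearMap.ker (x ^ i) := by
      apply le_antisymm
      · exact fun v hv => ⟨hv.1.1, hv.2.2⟩
      · exact fun v hv => ⟨⟨hv.1, hm i hv.2⟩, hF hv.1, hv.2⟩
    have h8 : (LinearMap.range x ⊓ LinearMap.ker (x ^ (i + 1))) ⊔ (F ⊓ LinearMap.ker (x ^ i)) ≤
        F ⊓ LinearMap.ker (x ^ (i + 1)) :=
      sup_le (inf_le_inf_right _ hF) (inf_le_inf_left F (hm i))
    have h9 := Submodule.finrank_mono h8
    rw [h7] at h6
    omega
end

section
/- Let V be a 2n-dimensional symplectic vector space and x a self-adjoint nilpotent endomorphism of V. If F ⊆ ker(x) is a subspace, then the Jordan type of the map induced by x on V/F equals the Jordan type of the restriction of x to F^⊥. -/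
open Module Submodule LinearMap

/-- for a self-adjoint nilpotent x on a 2n-dimensional symplectic space and
F ⊆ ker x, the Jordan type of the map induced by x on V/F equals the Jordan type of the
restriction of x to F^⊥ (Jordan types are determined by the dimensions of the kernels of
all powers). -/
theorem stmt5 (V : Type*) [AddCommGroup V] [Module ℂ V] [FiniteDimensional ℂ V]
    (n : ℕ) (hdim : finrank ℂ V = 2 * n)
    (B : V →ₗ[ℂ] V →ₗ[ℂ] ℂ) (hskew : ∀ v w : V, B w v = - B v w)
    (hnondeg : ∀ v : V, (∀ w : V, B v w = 0) → v = 0)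
    (x : V →ₗ[ℂ] V) (hsa : ∀ v w : V, B (x v) w = B v (x w)) (hnil : IsNilpotent x)
    (F : Submodule ℂ V) (hF : F ≤ LinearMap.ker x) :
    ∀ (hinv : F ≤ F.comap x) (hperp : ∀ v ∈ perp B F, x v ∈ perp B F) (j : ℕ),
      finrank ℂ (LinearMap.ker ((Submodule.mapQ F F x hinv) ^ j)) =
        finrank ℂ (LinearMap.ker ((x.restrict hperp) ^ j)) := by
  intro hinv hperp j
  have hBinj : Function.Injective B := by
    rw [injective_iff_map_eq_zero]
    intro v hv
    exact hnondeg v (fun w => by rw [hv]; rfl)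
  have hBsurj : Function.Surjective B := by
    have h : finrank ℂ V = finrank ℂ (Module.Dual ℂ V) := Subspace.dual_finrank_eq.symm
    exact (LinearMap.injective_iff_surjective_of_finrank_eq_finrank h).1 hBinj
  let f : perp B F →ₗ[ℂ] Module.Dual ℂ (V ⧸ F) :=
    { toFun := fun v => F.liftQ (B v.1) (fun w hw => v.2 w hw)
      map_add' := by
        intro a b
        apply Submodule.linearMap_qext
        ext w
        exact congrArg (fun g : V →ₗ[ℂ] ℂ => g w) (map_add B a.1 b.1)
      map_smul' := by
        intro a b
        apply Submodule.linearMap_qext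
        ext w
        exact congrArg (fun g : V →ₗ[ℂ] ℂ => g w) (map_smul B a b.1) }
  have hf : ∀ (v : perp B F) (w : V), f v (Submodule.Quotient.mk w) = B v.1 w := fun v w => rfl
  have hfinj : Function.Injective f := by
    rw [injective_iff_map_eq_zero]
    intro v hv
    apply Subtype.ext
    exact hnondeg v.1 (fun w => by rw [← hf, hv]; rfl)
  have hfsurj : Function.Surjective f := by
    intro φ
    obtain ⟨v, hv⟩ := hBsurj (φ ∘ₗ F.mkQ)
    refine ⟨⟨v, ?_⟩, ?_⟩
    · intro w hw
      rw [hv]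
      have : F.mkQ w = 0 := by simpa using hw
      simp only [LinearMap.comp_apply, this, map_zero]
    · apply Submodule.linearMap_qext
      refine Eq.trans ?_ hv
      ext w
      rfl
  let e : perp B F ≃ₗ[ℂ] Module.Dual ℂ (V ⧸ F) := LinearEquiv.ofBijective f ⟨hfinj, hfsurj⟩
  set Q := Submodule.mapQ F F x hinv with hQ
  set T := x.restrict hperp with hT
  have h1 : ∀ v : perp B F, e (T v) = (e v) ∘ₗ Q := by
    intro v
    apply Submodule.linearMap_qext
    ext w
    exact hsa v.1 w
  have hj : ∀ (j : ℕ) (v : perp B F), e ((T ^ j) v) = (Q ^ j).dualMap (e v) := by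
    intro j
    induction j with
    | zero => intro v; rfl
    | succ k ih =>
      intro v
      rw [pow_succ, Module.End.mul_apply, ih, h1, pow_succ']
      rfl
  have hker : LinearMap.ker (T ^ j) = (LinearMap.ker ((Q ^ j).dualMap)).comap e.toLinearMap := by
    ext v
    simp only [LinearMap.mem_ker, Submodule.mem_comap, LinearEquiv.coe_coe]
    rw [← hj, LinearEquiv.map_eq_zero_iff]
  have hfk : finrank ℂ (LinearMap.ker (T ^ j)) =
      finrank ℂ (LinearMap.ker ((Q ^ j).dualMap)) := by
    rw [hker, Submodule.comap_equiv_eq_map_symm]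
    exact LinearEquiv.finrank_map_eq e.symm _
  have r1 := LinearMap.finrank_range_add_finrank_ker (Q ^ j)
  have r2 := LinearMap.finrank_range_add_finrank_ker (Q ^ j).dualMap
  rw [LinearMap.finrank_range_dualMap_eq_finrank_range, Subspace.dual_finrank_eq] at r2
  omega
end

section
/- Let V be a symplectic vector space and x a self-adjoint nilpotent endomorphism. For each j ≥ 0, the pairing ⟨⟨u,w⟩⟩_j on Im(x^j), defined by ⟨⟨u,w⟩⟩_j = ⟨z,w⟩ where z is any vector with x^j z = u, is well defined, bilinear, skew-symmetric, and nondegenerate on Im(x^j). In particular Im(x^j) is even dimensional. -/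
open Module Submodule LinearMap

/-- A space with a nondegenerate skew-symmetric form is even dimensional. -/
theorem even_finrank_of_skew (W : Type*) [AddCommGroup W] [Module ℂ W] [FiniteDimensional ℂ W]
    (C : W →ₗ[ℂ] W →ₗ[ℂ] ℂ) (hskew : ∀ u w, C w u = - C u w)
    (hnd : ∀ u, (∀ w, C u w = 0) → u = 0) : Even (finrank ℂ W) := by
  let b := Module.finBasis ℂ W
  have hdet := (LinearMap.separatingLeft_iff_det_ne_zero (B := C) b).1 hnd
  set M := LinearMap.toMatrix₂ b b C with hM
  have hT : M.transpose = -M := by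
    ext i k
    simp [hM, LinearMap.toMatrix₂_apply, hskew (b i) (b k)]
  have h := congrArg Matrix.det hT
  rw [Matrix.det_transpose, Matrix.det_neg, Fintype.card_fin] at h
  by_contra hodd
  rw [Nat.not_even_iff_odd] at hodd
  rw [hodd.neg_one_pow, neg_one_mul] at h
  exact hdet (self_eq_neg.1 h)

/-- for a self-adjoint nilpotent x on a symplectic space, the pairing
⟨⟨u,w⟩⟩_j on Im(x^j), given by ⟨⟨x^j z, w⟩⟩_j = ⟨z,w⟩, is well defined, bilinear,
skew-symmetric and nondegenerate; in particular Im(x^j) is even dimensional. -/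
theorem stmt6 (V : Type*) [AddCommGroup V] [Module ℂ V] [FiniteDimensional ℂ V]
    (n : ℕ) (hdim : finrank ℂ V = 2 * n)
    (B : V →ₗ[ℂ] V →ₗ[ℂ] ℂ) (hskew : ∀ v w : V, B w v = - B v w)
    (hnondeg : ∀ v : V, (∀ w : V, B v w = 0) → v = 0)
    (x : V →ₗ[ℂ] V) (hsa : ∀ v w : V, B (x v) w = B v (x w)) (hnil : IsNilpotent x)
    (j : ℕ) :
    ∃ Bj : ↥(LinearMap.range (x ^ j)) →ₗ[ℂ] ↥(LinearMap.range (x ^ j)) →ₗ[ℂ] ℂ,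
      (∀ (z : V) (w : ↥(LinearMap.range (x ^ j))),
        Bj ⟨(x ^ j) z, LinearMap.mem_range_self (x ^ j) z⟩ w = B z w) ∧
      (∀ u w : ↥(LinearMap.range (x ^ j)), Bj w u = - Bj u w) ∧
      (∀ u : ↥(LinearMap.range (x ^ j)), (∀ w, Bj u w = 0) → u = 0) ∧
      Even (finrank ℂ ↥(LinearMap.range (x ^ j))) := by
  have hpow : ∀ v w : V, B ((x ^ j) v) w = B v ((x ^ j) w) := by
    clear hnil hdim
    induction j with
    | zero => intro v w; simp
    | succ k ih =>
      intro v w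
      rw [pow_succ, Module.End.mul_apply, ih, hsa, ← Module.End.mul_apply,
        ← pow_succ', ← pow_succ]
  obtain ⟨s, hs⟩ := (x ^ j).rangeRestrict.exists_rightInverse_of_surjective
    (LinearMap.range_rangeRestrict _)
  have hs' : ∀ u, (x ^ j) (s u) = (u : V) := fun u =>
    congrArg Subtype.val (LinearMap.congr_fun hs u)
  let Bj := LinearMap.compl₁₂ B s (LinearMap.range (x ^ j)).subtype
  have hBj : ∀ u w, Bj u w = B (s u) w := fun u w => rfl
  have h2 : ∀ u w, Bj w u = - Bj u w := by
    intro u w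
    rw [hBj, hBj, ← hs' u, ← hpow, hs' w]
    exact hskew _ _
  have h3 : ∀ u, (∀ w, Bj u w = 0) → u = 0 := by
    intro u hu
    apply Subtype.ext
    apply hnondeg
    intro w
    rw [← hs' u, hpow]
    exact hu ⟨_, LinearMap.mem_range_self (x ^ j) w⟩
  refine ⟨Bj, ?_, h2, h3, even_finrank_of_skew _ Bj h2 h3⟩
  intro z w
  rw [hBj, ← hs' w, ← hpow, hs', ← hpow]
end

section
/- Let V be a symplectic vector space, x a self-adjoint nilpotent endomorphism, and F ⊆ V any subspace. Then for all j ≥ 0, x^j(F^⊥) = (F ∩ Im(x^j))^{⊥⊥_j}, where ⊥⊥_j denotes the perpendicular inside Im(x^j) with respect to the form ⟨⟨ , ⟩⟩_j. -/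
open Module Submodule LinearMap

/-- for a self-adjoint nilpotent x and any subspace F,
x^j(F^⊥) = (F ∩ Im(x^j))^{⊥⊥_j}, the perpendicular taken inside Im(x^j) with respect to
the form ⟨⟨ , ⟩⟩_j (any bilinear form on Im(x^j) satisfying the defining property
⟨⟨x^j z, w⟩⟩_j = ⟨z, w⟩). -/
theorem stmt7 (V : Type*) [AddCommGroup V] [Module ℂ V] [FiniteDimensional ℂ V]
    (n : ℕ) (hdim : finrank ℂ V = 2 * n)
    (B : V →ₗ[ℂ] V →ₗ[ℂ] ℂ) (hskew : ∀ v w : V, B w v = - B v w)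
    (hnondeg : ∀ v : V, (∀ w : V, B v w = 0) → v = 0)
    (x : V →ₗ[ℂ] V) (hsa : ∀ v w : V, B (x v) w = B v (x w)) (hnil : IsNilpotent x)
    (F : Submodule ℂ V) (j : ℕ)
    (Bj : ↥(LinearMap.range (x ^ j)) →ₗ[ℂ] ↥(LinearMap.range (x ^ j)) →ₗ[ℂ] ℂ)
    (hBj : ∀ (z : V) (w : ↥(LinearMap.range (x ^ j))),
      Bj ⟨(x ^ j) z, LinearMap.mem_range_self (x ^ j) z⟩ w = B z w) :
    ((perp B F).map (x ^ j) : Set V) =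
      {u : V | ∃ hu : u ∈ LinearMap.range (x ^ j),
        ∀ (w : V) (hw : w ∈ LinearMap.range (x ^ j)), w ∈ F → Bj ⟨u, hu⟩ ⟨w, hw⟩ = 0} := by
  have hpow : ∀ (i : ℕ) (v w : V), B ((x ^ i) v) w = B v ((x ^ i) w) := by
    intro i
    induction i with
    | zero => intro v w; simp
    | succ k ih =>
      intro v w
      rw [pow_succ, Module.End.mul_apply, ih, hsa, ← Module.End.mul_apply,
        ← pow_succ', ← pow_succ]
  have hinj : Function.Injective B := by
    rw [injective_iff_map_eq_zero]
    intro a ha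
    exact hnondeg a (fun w => by rw [ha]; rfl)
  have hsurj : Function.Surjective B :=
    (LinearMap.injective_iff_surjective_of_finrank_eq_finrank
      (Subspace.dual_finrank_eq (K := ℂ) (V := V)).symm).1 hinj
  ext u
  constructor
  · rintro ⟨z, hz, rfl⟩
    refine ⟨LinearMap.mem_range_self _ z, fun w hw hwF => ?_⟩
    rw [hBj]
    exact hz w hwF
  · rintro ⟨⟨z, rfl⟩, h⟩
    have h1 : (B z : Module.Dual ℂ V) ∈ (F ⊓ LinearMap.range (x ^ j)).dualAnnihilator := by
      rw [Submodule.mem_dualAnnihilator]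
      rintro w ⟨hwF, hw⟩
      have := h w hw hwF
      rwa [hBj] at this
    rw [Subspace.dualAnnihilator_inf_eq, Submodule.mem_sup] at h1
    obtain ⟨f, hf, g, hg, hfg⟩ := h1
    rw [Submodule.mem_dualAnnihilator] at hf hg
    obtain ⟨a, rfl⟩ := hsurj f
    obtain ⟨b, rfl⟩ := hsurj g
    refine ⟨a, hf, ?_⟩
    have hb : (x ^ j) b = 0 := by
      apply hnondeg
      intro w
      rw [hpow]
      exact hg _ (LinearMap.mem_range_self _ w)
    have hz : a + b = z := hinj (by rw [map_add]; exact hfg)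
    rw [← hz, map_add, hb, add_zero]
end

section
/- Let V be a symplectic vector space, x a self-adjoint nilpotent endomorphism with x² = 0, F ⊆ ker(x) a subspace, and v ∈ Im(x) with v ∉ F. Then F ∩ x(F^⊥) = (F + ℂv) ∩ x(F^⊥) if and only if F ∩ x(F^⊥) is not contained in (ℂv)^{⊥⊥}, where ⊥⊥ is the perpendicular in Im(x) with respect to the form ⟨⟨ , ⟩⟩₁. -/
open Module Submodule LinearMap

/-- The double perpendicular of a subspace is contained in it. -/
theorem exists_perp_of_notMem {V : Type*} [AddCommGroup V] [Module ℂ V] [FiniteDimensional ℂ V]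
    (B : V →ₗ[ℂ] V →ₗ[ℂ] ℂ)
    (hnondeg : ∀ v : V, (∀ w : V, B v w = 0) → v = 0)
    (W : Submodule ℂ V) (v : V) (h : ∀ w ∈ perp B W, B w v = 0) : v ∈ W := by
  by_contra hv
  obtain ⟨f, hf, hW⟩ := Submodule.exists_le_ker_of_notMem hv
  have hinj : Function.Injective B := by
    rw [injective_iff_map_eq_zero]
    intro a ha
    exact hnondeg a (fun w => by simp [ha])
  have hsurj : Function.Surjective B :=
    (LinearMap.injective_iff_surjective_of_finrank_eq_finrank
      (Subspace.dual_finrank_eq (K := ℂ) (V := V)).symm).1 hinj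
  obtain ⟨w, rfl⟩ := hsurj f
  exact hf (h w (fun u hu => hW hu))

/-- for self-adjoint x with x² = 0, F ⊆ ker x, v ∈ Im(x), v ∉ F:
F ∩ x(F^⊥) = (F + ℂv) ∩ x(F^⊥) if and only if F ∩ x(F^⊥) ⊄ (ℂv)^{⊥⊥}, where ⊥⊥ is the
perpendicular in Im(x) with respect to the form ⟨⟨ , ⟩⟩ (any bilinear form B1 on Im(x)
with ⟨⟨x z, w⟩⟩ = ⟨z, w⟩). -/
theorem stmt8 (V : Type*) [AddCommGroup V] [Module ℂ V] [FiniteDimensional ℂ V]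
    (n : ℕ) (hdim : finrank ℂ V = 2 * n)
    (B : V →ₗ[ℂ] V →ₗ[ℂ] ℂ) (hskew : ∀ v w : V, B w v = - B v w)
    (hnondeg : ∀ v : V, (∀ w : V, B v w = 0) → v = 0)
    (x : V →ₗ[ℂ] V) (hsa : ∀ v w : V, B (x v) w = B v (x w)) (hx2 : x ∘ₗ x = 0)
    (F : Submodule ℂ V) (hF : F ≤ LinearMap.ker x)
    (v : V) (hv : v ∈ LinearMap.range x) (hvF : v ∉ F)
    (B1 : ↥(LinearMap.range x) →ₗ[ℂ] ↥(LinearMap.range x) →ₗ[ℂ] ℂ)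
    (hB1 : ∀ (z : V) (w : ↥(LinearMap.range x)),
      B1 ⟨x z, LinearMap.mem_range_self x z⟩ w = B z w) :
    F ⊓ (perp B F).map x = (F ⊔ Submodule.span ℂ {v}) ⊓ (perp B F).map x ↔
      ¬ ((F ⊓ (perp B F).map x : Submodule ℂ V) : Set V) ⊆
          {u : V | ∃ hu : u ∈ LinearMap.range x, B1 ⟨u, hu⟩ ⟨v, hv⟩ = 0} := by
  have key : v ∈ F ⊔ (perp B F).map x ↔ ∀ w ∈ perp B F, x w ∈ F → B w v = 0 := by
    constructor
    · intro h w hw hxw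
      obtain ⟨f, hf, u, ⟨z, hz, rfl⟩, rfl⟩ := Submodule.mem_sup.1 h
      have h1 : B z (x w) = 0 := hz _ hxw
      rw [map_add, hw f hf, ← hsa, hskew, h1]
      simp
    · intro h
      apply exists_perp_of_notMem B hnondeg
      intro w hw
      refine h w (fun f hf => hw f (Submodule.mem_sup_left hf)) ?_
      apply exists_perp_of_notMem B hnondeg
      intro z hz
      rw [← hsa, hskew, hw _ (Submodule.mem_sup_right ⟨z, hz, rfl⟩), neg_zero]
  have h2 : ((F ⊓ (perp B F).map x : Submodule ℂ V) : Set V) ⊆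
          {u : V | ∃ hu : u ∈ LinearMap.range x, B1 ⟨u, hu⟩ ⟨v, hv⟩ = 0} ↔
          v ∈ F ⊔ (perp B F).map x := by
    rw [key]
    constructor
    · intro h w hw hxw
      obtain ⟨_, h3⟩ := h (show x w ∈ _ from ⟨hxw, w, hw, rfl⟩)
      rwa [hB1] at h3
    · rintro h _ ⟨hu, w, hw, rfl⟩
      exact ⟨⟨w, rfl⟩, by rw [hB1]; exact h w hw hu⟩
  rw [h2]
  constructor
  · intro h hvS
    obtain ⟨f, hf, u, hu, hfu⟩ := Submodule.mem_sup.1 hvS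
    have h3 : u ∈ (F ⊔ Submodule.span ℂ {v}) ⊓ (perp B F).map x := by
      refine ⟨?_, hu⟩
      have h4 : u = v - f := by rw [← hfu]; abel
      rw [h4]
      exact Submodule.sub_mem _
        (Submodule.mem_sup_right (Submodule.mem_span_singleton_self v))
        (Submodule.mem_sup_left hf)
    rw [← h] at h3
    exact hvF (hfu ▸ F.add_mem hf h3.1)
  · intro h
    apply le_antisymm (inf_le_inf_right _ le_sup_left)
    rintro u ⟨hu, hux⟩
    refine ⟨?_, hux⟩
    obtain ⟨f, hf, s, hs, rfl⟩ := Submodule.mem_sup.1 hu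
    obtain ⟨c, rfl⟩ := Submodule.mem_span_singleton.1 hs
    by_cases hc : c = 0
    · simpa [hc] using hf
    · exfalso
      apply h
      have h5 : c • v ∈ F ⊔ (perp B F).map x := by
        have h6 : c • v = (f + c • v) - f := by abel
        rw [h6]
        exact Submodule.sub_mem _ (Submodule.mem_sup_right hux) (Submodule.mem_sup_left hf)
      exact (Submodule.smul_mem_iff _ hc).1 h5
end

section
/- Let V be a 2n-dimensional symplectic space and x a self-adjoint endomorphism with x ≠ 0 and x² = 0, of Jordan type (2^{2n₂} 1^{2n₁}) with 2n₂ + n₁ = n; let F be a k-dimensional isotropic subspace of ker(x), set k₂ = dim(F ∩ Im(x)), k₁ = k − k₂, and 2h = dim((F ∩ Im(x))/(F ∩ x(F^⊥))). Then the Jordan type of the induced map on F^⊥/F is (2^{2n₂−2k₂+2h} 1^{2n₁−2k₁+2k₂−4h}). -/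
open Module Submodule LinearMap

theorem finrank_map_aux {V W : Type*} [AddCommGroup V] [Module ℂ V] [FiniteDimensional ℂ V]
    [AddCommGroup W] [Module ℂ W] (f : V →ₗ[ℂ] W) (U : Submodule ℂ V) :
    finrank ℂ ↥(U.map f) + finrank ℂ ↥(U ⊓ LinearMap.ker f) = finrank ℂ U := by
  have h := LinearMap.finrank_range_add_finrank_ker (f.domRestrict U)
  rw [LinearMap.range_domRestrict, LinearMap.ker_domRestrict] at h
  rw [← h, ← Submodule.map_comap_subtype,
    LinearEquiv.finrank_eq (Submodule.equivMapOfInjective U.subtype U.injective_subtype _).symm]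

theorem finrank_perp_aux {V : Type*} [AddCommGroup V] [Module ℂ V] [FiniteDimensional ℂ V]
    (B : V →ₗ[ℂ] V →ₗ[ℂ] ℂ) (hskew : ∀ v w : V, B w v = - B v w)
    (hnondeg : ∀ v : V, (∀ w : V, B v w = 0) → v = 0) (W : Submodule ℂ V) :
    finrank ℂ ↥(perp B W) + finrank ℂ W = finrank ℂ V := by
  have e : perp B W = LinearMap.BilinForm.orthogonal B W := by
    ext v
    simp only [mem_perp, LinearMap.BilinForm.mem_orthogonal_iff]
    refine forall₂_congr fun w _ => ?_
    rw [hskew v w, neg_eq_zero]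
  have hN : LinearMap.BilinForm.Nondegenerate B := by
    refine ⟨hnondeg, fun v hv => hnondeg v fun w => ?_⟩
    rw [hskew w v, hv w, neg_zero]
  have := LinearMap.BilinForm.finrank_orthogonal hN W
  have := Submodule.finrank_le W
  rw [e]
  omega

theorem finrank_range_aux {V : Type*} [AddCommGroup V] [Module ℂ V] [FiniteDimensional ℂ V]
    (x : V →ₗ[ℂ] V) (W U : Submodule ℂ V)
    (hW : ∀ v ∈ W, x v ∈ W) (hU : ∀ v ∈ U, x v ∈ U) :
    finrank ℂ ↥(LinearMap.range (subQuotMap x W U hW hU)) + finrank ℂ ↥(U ⊓ W.map x)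
      = finrank ℂ ↥(W.map x) := by
  let i : SubQuot W U →ₗ[ℂ] (V ⧸ U) := Submodule.mapQ _ _ W.subtype le_rfl
  have hi : Function.Injective i := by
    rw [← LinearMap.ker_eq_bot, LinearMap.ker_eq_bot']
    intro m
    obtain ⟨v, rfl⟩ := Submodule.Quotient.mk_surjective _ m
    intro h
    have h' : (v : V) ∈ U := by
      simpa [i, Submodule.mapQ_apply, Submodule.Quotient.mk_eq_zero] using h
    simpa [Submodule.Quotient.mk_eq_zero] using h'
  have e : (LinearMap.range (subQuotMap x W U hW hU)).map i = (W.map x).map U.mkQ := by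
    ext y
    constructor
    · rintro ⟨_, ⟨m, rfl⟩, rfl⟩
      obtain ⟨v, rfl⟩ := Submodule.Quotient.mk_surjective _ m
      exact ⟨x v, ⟨v, v.2, rfl⟩, rfl⟩
    · rintro ⟨_, ⟨v, hv, rfl⟩, rfl⟩
      exact ⟨_, ⟨Submodule.Quotient.mk ⟨v, hv⟩, rfl⟩, rfl⟩
  have h1 := finrank_map_aux U.mkQ (W.map x)
  rw [Submodule.ker_mkQ, ← e, inf_comm,
    LinearEquiv.finrank_eq (Submodule.equivMapOfInjective i hi _).symm] at h1
  exact h1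

/-- for self-adjoint x ≠ 0 with x² = 0 of Jordan type (2^{2n₂} 1^{2n₁}) on a
2n-dimensional symplectic space, and F a k-dimensional isotropic subspace of ker x with
k₂ = dim(F ∩ Im x), k₁ = k − k₂ and 2h = dim((F ∩ Im x)/(F ∩ x(F^⊥))), the Jordan type of
the induced map on F^⊥/F is (2^{2n₂−2k₂+2h} 1^{2n₁−2k₁+2k₂−4h}). Since the induced map
also squares to zero, its Jordan type is (2^A 1^C) iff its rank is A and 2A + C is the
dimension of F^⊥/F. -/
theorem stmt11 (V : Type*) [AddCommGroup V] [Module ℂ V] [FiniteDimensional ℂ V]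
    (B : V →ₗ[ℂ] V →ₗ[ℂ] ℂ) (hskew : ∀ v w : V, B w v = - B v w)
    (hnondeg : ∀ v : V, (∀ w : V, B v w = 0) → v = 0)
    (x : V →ₗ[ℂ] V) (hsa : ∀ v w : V, B (x v) w = B v (x w))
    (hx2 : x ∘ₗ x = 0) (hx0 : x ≠ 0)
    (n n₁ n₂ : ℕ) (hdim : finrank ℂ V = 2 * n) (hn : n = 2 * n₂ + n₁)
    (hrank : finrank ℂ ↥(LinearMap.range x) = 2 * n₂)
    (F : Submodule ℂ V) (k k₁ k₂ h : ℕ)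
    (hFker : F ≤ LinearMap.ker x) (hiso : F ≤ perp B F) (hkF : finrank ℂ F = k)
    (hk₂ : finrank ℂ ↥(F ⊓ LinearMap.range x) = k₂) (hk₁ : k₁ + k₂ = k)
    (hh : finrank ℂ ↥(F ⊓ (perp B F).map x) + 2 * h = k₂) :
    ∀ (hFp : ∀ v ∈ perp B F, x v ∈ perp B F) (hFi : ∀ v ∈ F, x v ∈ F),
      ∃ A C : ℕ,
        A + 2 * k₂ = 2 * n₂ + 2 * h ∧
        C + 2 * k₁ + 4 * h = 2 * n₁ + 2 * k₂ ∧
        subQuotMap x (perp B F) F hFp hFi ∘ₗ subQuotMap x (perp B F) F hFp hFi = 0 ∧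
        finrank ℂ ↥(LinearMap.range (subQuotMap x (perp B F) F hFp hFi)) = A ∧
        finrank ℂ (SubQuot (perp B F) F) = 2 * A + C := by
  intro hFp hFi
  have hsq : subQuotMap x (perp B F) F hFp hFi ∘ₗ subQuotMap x (perp B F) F hFp hFi = 0 := by
    ext v
    have h0 : x (x v) = 0 := LinearMap.congr_fun hx2 (v : V)
    have : (x.restrict hFp) ((x.restrict hFp) v) = 0 := Subtype.ext h0
    simp [subQuotMap, this]
  have hP := finrank_perp_aux B hskew hnondeg F
  have hS := finrank_perp_aux B hskew hnondeg (F ⊔ LinearMap.range x)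
  have hsup := Submodule.finrank_sup_add_finrank_inf_eq F (LinearMap.range x)
  have hM := finrank_map_aux x (perp B F)
  have e : perp B F ⊓ LinearMap.ker x = perp B (F ⊔ LinearMap.range x) := by
    ext v
    simp only [Submodule.mem_inf, mem_perp, LinearMap.mem_ker]
    constructor
    · rintro ⟨h1, h2⟩ w hw
      obtain ⟨a, ha, _, ⟨b, rfl⟩, rfl⟩ := Submodule.mem_sup.1 hw
      rw [map_add, h1 a ha, ← hsa, h2]
      simp
    · intro hv
      refine ⟨fun w hw => hv w (Submodule.mem_sup_left hw), hnondeg _ fun w => ?_⟩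
      rw [hsa]
      exact hv _ (Submodule.mem_sup_right ⟨w, rfl⟩)
  rw [e] at hM
  have hR := finrank_range_aux x (perp B F) F hFp hFi
  have hQ := Submodule.finrank_quotient_add_finrank (F.comap (perp B F).subtype)
  rw [LinearEquiv.finrank_eq (Submodule.comapSubtypeEquivOfLe hiso)] at hQ
  have hK := LinearMap.finrank_range_add_finrank_ker (subQuotMap x (perp B F) F hFp hFi)
  have hQ2 : finrank ℂ (SubQuot (perp B F) F) + finrank ℂ F = finrank ℂ ↥(perp B F) := hQ
  have hle := Submodule.finrank_mono (LinearMap.range_le_ker_iff.2 hsq)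
  refine ⟨finrank ℂ ↥(LinearMap.range (subQuotMap x (perp B F) F hFp hFi)),
    finrank ℂ (SubQuot (perp B F) F)
      - 2 * finrank ℂ ↥(LinearMap.range (subQuotMap x (perp B F) F hFp hFi)),
    ?_, ?_, hsq, rfl, ?_⟩ <;> omega
end

section
/- Let V be a 2n-dimensional symplectic space and x a self-adjoint nilpotent endomorphism with x² = 0 and Jordan type (2^{2n₂} 1^{2n₁}). For 0 ≤ k ≤ n₁ + 2n₂, the set X(k₂,h) of k-dimensional isotropic subspaces F of ker(x) with dim(F ∩ Im(x)) = k₂ and dim(F ∩ x(F^⊥)) = k₂ − 2h is nonempty if and only if max{0, k−n₁} ≤ k₂ ≤ min{k, 2n₂} and max{0, k₂−n₂} ≤ h ≤ k₂/2. -/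
open Module Submodule LinearMap

/-- Dimension of the perpendicular for a nondegenerate skew form. -/
lemma aux_finrank_perp {V : Type*} [AddCommGroup V] [Module ℂ V] [FiniteDimensional ℂ V]
    (B : V →ₗ[ℂ] V →ₗ[ℂ] ℂ) (hskew : ∀ v w : V, B w v = - B v w)
    (hnondeg : ∀ v : V, (∀ w : V, B v w = 0) → v = 0) (W : Submodule ℂ V) :
    finrank ℂ (perp B W) + finrank ℂ W = finrank ℂ V := by
  have h1 : perp B W = LinearMap.BilinForm.orthogonal B W := by
    ext v
    rw [mem_perp, LinearMap.BilinForm.mem_orthogonal_iff]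
    refine forall₂_congr fun w _ => ?_
    show _ ↔ B w v = 0
    rw [hskew v w, neg_eq_zero]
  have hB : LinearMap.BilinForm.Nondegenerate B := by
    constructor
    · intro v hv
      exact hnondeg v hv
    · intro v hv
      refine hnondeg v fun w => ?_
      rw [hskew w v, hv w, neg_zero]
  have h2 := LinearMap.BilinForm.finrank_orthogonal hB W
  have h3 := Submodule.finrank_le W
  rw [h1, h2]
  omega

lemma aux_span_perp {V : Type*} [AddCommGroup V] [Module ℂ V]
    (B : V →ₗ[ℂ] V →ₗ[ℂ] ℂ) {S : Set V} {W : Submodule ℂ V}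
    (h : ∀ s ∈ S, ∀ w ∈ W, B s w = 0) : span ℂ S ≤ perp B W :=
  span_le.2 fun s hs w hw => h s hs w hw

lemma aux_mem_perp_span {V : Type*} [AddCommGroup V] [Module ℂ V]
    (B : V →ₗ[ℂ] V →ₗ[ℂ] ℂ) {S : Set V} {v : V}
    (h : ∀ s ∈ S, B v s = 0) : v ∈ perp B (span ℂ S) := by
  intro w hw
  have : span ℂ S ≤ LinearMap.ker (B v) := span_le.2 fun s hs => h s hs
  exact this hw

lemma aux_linInd {V ι : Type*} [AddCommGroup V] [Module ℂ V] [DecidableEq ι]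
    (g : ι → V) (φ : ι → V →ₗ[ℂ] ℂ) (h : ∀ i j, φ j (g i) = if i = j then 1 else 0) :
    LinearIndependent ℂ g := by
  rw [linearIndependent_iff']
  intro s c hc i hi
  have := congrArg (φ i) hc
  simpa [map_sum, h, hi] using this

/-- Hyperbolic families inside a subspace on which the skew form is nondegenerate. -/
lemma aux_hyperbolic {V : Type*} [AddCommGroup V] [Module ℂ V] [FiniteDimensional ℂ V]
    (B : V →ₗ[ℂ] V →ₗ[ℂ] ℂ) (hskew : ∀ v w : V, B w v = - B v w) (U : Submodule ℂ V)
    (hU : ∀ v ∈ U, (∀ w ∈ U, B v w = 0) → v = 0) (m : ℕ) (hm : 2 * m ≤ finrank ℂ U) :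
    ∃ e f : Fin m → V, (∀ i, e i ∈ U) ∧ (∀ i, f i ∈ U) ∧ (∀ i j, B (e i) (e j) = 0) ∧
      (∀ i j, B (f i) (f j) = 0) ∧ (∀ i j, B (e i) (f j) = if i = j then 1 else 0) := by
  induction m with
  | zero => exact ⟨fun _ => 0, fun _ => 0, by simp, by simp, by simp, by simp, fun i => i.elim0⟩
  | succ m ih =>
    obtain ⟨e, f, heU, hfU, hee, hff, hef⟩ := ih (by omega)
    have hself : ∀ v, B v v = 0 := fun v => by
      have := hskew v v
      exact self_eq_neg.1 this
    have hfe : ∀ i j, B (f i) (e j) = if i = j then -1 else 0 := by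
      intro i j
      rw [hskew (e j) (f i), hef]
      by_cases h : i = j
      · simp [h]
      · simp [h, Ne.symm h]
    let T : U →ₗ[ℂ] (Fin m ⊕ Fin m → ℂ) :=
      LinearMap.pi (fun s => (B (Sum.elim e f s)) ∘ₗ U.subtype)
    have hT : LinearMap.ker T ≠ ⊥ := by
      apply LinearMap.ker_ne_bot_of_finrank_lt
      simp
      omega
    obtain ⟨⟨v, hvU⟩, hvT, hv0⟩ := Submodule.exists_mem_ne_zero_of_ne_bot hT
    have hv0' : v ≠ 0 := fun h => hv0 (by simpa using h)
    have hev : ∀ i, B (e i) v = 0 := fun i => by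
      have := congrFun (LinearMap.mem_ker.1 hvT) (Sum.inl i)
      simpa [T] using this
    have hfv : ∀ i, B (f i) v = 0 := fun i => by
      have := congrFun (LinearMap.mem_ker.1 hvT) (Sum.inr i)
      simpa [T] using this
    have hve : ∀ i, B v (e i) = 0 := fun i => by rw [hskew (e i) v, hev, neg_zero]
    have hvf : ∀ i, B v (f i) = 0 := fun i => by rw [hskew (f i) v, hfv, neg_zero]
    obtain ⟨w, hwU, hw⟩ : ∃ w ∈ U, B v w ≠ 0 := by
      by_contra hcon
      push Not at hcon
      exact hv0' (hU v hvU hcon)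
    let w' : V := (B v w)⁻¹ • (w - ∑ i, B (e i) w • f i + ∑ i, B (f i) w • e i)
    have hw'U : w' ∈ U := U.smul_mem _ (U.add_mem (U.sub_mem hwU
      (U.sum_mem fun i _ => U.smul_mem _ (hfU i))) (U.sum_mem fun i _ => U.smul_mem _ (heU i)))
    have hvw' : B v w' = 1 := by
      simp [w', hvf, hve, hw]
    have hew' : ∀ i, B (e i) w' = 0 := fun i => by
      simp [w', hee, hef]
    have hfw' : ∀ i, B (f i) w' = 0 := fun i => by
      simp [w', hff, hfe]
    have hwf' : ∀ i, B w' (f i) = 0 := fun i => by rw [hskew (f i) w', hfw', neg_zero]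
    refine ⟨Fin.snoc (α := fun _ => V) e v, Fin.snoc (α := fun _ => V) f w', ?_, ?_, ?_, ?_, ?_⟩
    · intro i
      induction i using Fin.lastCases <;> simp [hvU, heU]
    · intro i
      induction i using Fin.lastCases <;> simp [hw'U, hfU]
    · intro i j
      induction i using Fin.lastCases <;> induction j using Fin.lastCases <;>
        simp [hself, hev, hve, hee]
    · intro i j
      induction i using Fin.lastCases <;> induction j using Fin.lastCases <;>
        simp only [Fin.snoc_last, Fin.snoc_castSucc, hself, hfw', hwf', hff]
    · intro i j
      induction i using Fin.lastCases <;> induction j using Fin.lastCases <;>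
        simp only [Fin.snoc_last, Fin.snoc_castSucc, hvw', hvf, hew', hef]
      · simp
      · rw [if_neg (Fin.castSucc_lt_last _).ne']
      · rw [if_neg (Fin.castSucc_lt_last _).ne]
      · simp

lemma aux_necessary (V : Type*) [AddCommGroup V] [Module ℂ V] [FiniteDimensional ℂ V]
    (B : V →ₗ[ℂ] V →ₗ[ℂ] ℂ) (hskew : ∀ v w : V, B w v = - B v w)
    (hnondeg : ∀ v : V, (∀ w : V, B v w = 0) → v = 0)
    (x : V →ₗ[ℂ] V) (hsa : ∀ v w : V, B (x v) w = B v (x w)) (hx : ∀ v, x (x v) = 0)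
    (F : Submodule ℂ V) (hF : F ≤ LinearMap.ker x) (hiso : F ≤ perp B F) :
    2 * (finrank ℂ F + finrank ℂ (LinearMap.range x)) ≤
        finrank ℂ V + 2 * finrank ℂ ↥(F ⊓ LinearMap.range x) ∧
    finrank ℂ ↥(F ⊓ LinearMap.range x) + finrank ℂ ↥(F ⊓ (perp B F).map x) ≤
      finrank ℂ (LinearMap.range x) := by
  have hkr : ∀ v ∈ LinearMap.ker x, ∀ w ∈ LinearMap.range x, B v w = 0 := by
    rintro v hv _ ⟨w, rfl⟩
    rw [← hsa, LinearMap.mem_ker.1 hv]; simp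
  have hrk : LinearMap.range x ≤ LinearMap.ker x := by
    rintro _ ⟨w, rfl⟩
    exact hx w
  constructor
  · have h1 : F ⊔ LinearMap.range x ≤ perp B (F ⊔ LinearMap.range x) := by
      intro v hv w hw
      obtain ⟨a, ha, b, hb, rfl⟩ := Submodule.mem_sup.1 hv
      obtain ⟨c, hc, d, hd, rfl⟩ := Submodule.mem_sup.1 hw
      have h1 := hiso ha c hc
      have h2 := hkr a (hF ha) d hd
      have h3 := hkr c (hF hc) b hb
      have h4 := hkr b (hrk hb) d hd
      have h5 : B b c = 0 := by rw [hskew c b, h3, neg_zero]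
      simp [h1, h2, h4, h5]
    have h2 := Submodule.finrank_mono h1
    have h3 := aux_finrank_perp B hskew hnondeg (F ⊔ LinearMap.range x)
    have h4 := Submodule.finrank_sup_add_finrank_inf_eq F (LinearMap.range x)
    omega
  · set G := F ⊓ LinearMap.range x with hG
    have h1 : F ⊓ (perp B F).map x ≤ (perp B G).map x := by
      refine inf_le_right.trans (Submodule.map_mono ?_)
      intro v hv w hw
      exact hv w hw.1
    have h2 := Submodule.finrank_mono h1
    have h3 := aux_finrank_perp B hskew hnondeg G
    have h4 := LinearMap.finrank_range_add_finrank_ker x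
    have h5 := LinearMap.finrank_range_add_finrank_ker (x.domRestrict (perp B G))
    have h6 : LinearMap.range (x.domRestrict (perp B G)) = (perp B G).map x :=
      LinearMap.range_domRestrict _ _
    have h7 : finrank ℂ (LinearMap.ker (x.domRestrict (perp B G))) = finrank ℂ (LinearMap.ker x) := by
      have hle : LinearMap.ker x ≤ perp B G := fun v hv w hw => hkr v hv w hw.2
      rw [LinearMap.ker_domRestrict]
      exact (Submodule.comapSubtypeEquivOfLe hle).finrank_eq
    rw [h6, h7] at h5
    omega

lemma aux_sufficient (V : Type*) [AddCommGroup V] [Module ℂ V] [FiniteDimensional ℂ V]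
    (B : V →ₗ[ℂ] V →ₗ[ℂ] ℂ) (hskew : ∀ v w : V, B w v = - B v w)
    (hnondeg : ∀ v : V, (∀ w : V, B v w = 0) → v = 0)
    (x : V →ₗ[ℂ] V) (hsa : ∀ v w : V, B (x v) w = B v (x w)) (hx : ∀ v, x (x v) = 0)
    (a b c : ℕ) (hab : 2 * (a + b) ≤ finrank ℂ (LinearMap.range x))
    (hc : 2 * c + 2 * finrank ℂ (LinearMap.range x) ≤ finrank ℂ V) :
    ∃ F : Submodule ℂ V, F ≤ LinearMap.ker x ∧ F ≤ perp B F ∧ finrank ℂ F = a + (b + b) + c ∧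
        finrank ℂ ↥(F ⊓ LinearMap.range x) = a + (b + b) ∧
        finrank ℂ ↥(F ⊓ (perp B F).map x) = a := by
  have hkr : ∀ v ∈ LinearMap.ker x, ∀ w, B v (x w) = 0 := by
    intro v hv w
    rw [← hsa, LinearMap.mem_ker.1 hv]; simp
  have hrk : LinearMap.range x ≤ LinearMap.ker x := by
    rintro _ ⟨w, rfl⟩
    exact hx w
  have hrn := LinearMap.finrank_range_add_finrank_ker x
  have hperp : perp B (LinearMap.ker x) = LinearMap.range x := by
    symm
    apply Submodule.eq_of_le_of_finrank_eq
    · rintro _ ⟨w, rfl⟩ v hv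
      rw [hskew v, hkr v hv, neg_zero]
    · have := aux_finrank_perp B hskew hnondeg (LinearMap.ker x)
      omega
  -- complements
  obtain ⟨C, hC⟩ := Submodule.exists_isCompl (LinearMap.ker x)
  obtain ⟨D', hD'⟩ := Submodule.exists_isCompl (LinearMap.range x)
  let D := LinearMap.ker x ⊓ D'
  have hDk : D ≤ LinearMap.ker x := inf_le_left
  have hDr : D ⊓ LinearMap.range x = ⊥ := by
    have := hD'.inf_eq_bot
    rw [eq_bot_iff, ← this]
    exact le_inf inf_le_right (inf_le_left.trans inf_le_right)
  have hDs : LinearMap.range x ⊔ D = LinearMap.ker x := by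
    show LinearMap.range x ⊔ LinearMap.ker x ⊓ D' = _
    rw [inf_comm, ← sup_inf_assoc_of_le _ hrk, hD'.sup_eq_top, top_inf_eq]
  have hDdim : finrank ℂ (LinearMap.range x) + finrank ℂ D = finrank ℂ (LinearMap.ker x) := by
    have := Submodule.finrank_sup_add_finrank_inf_eq (LinearMap.range x) D
    rw [hDs, inf_comm, hDr, finrank_bot] at this
    omega
  have hCdim : finrank ℂ C = finrank ℂ (LinearMap.range x) := by
    have := Submodule.finrank_add_eq_of_isCompl hC
    omega
  have hCnd : ∀ v ∈ C, (∀ w ∈ C, (B.compl₂ x) v w = 0) → v = 0 := by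
    intro v hv h
    have h1 : x v = 0 := by
      apply hnondeg
      intro w
      obtain ⟨p, hp, q, hq, rfl⟩ := Submodule.mem_sup.1
        (show w ∈ LinearMap.ker x ⊔ C by rw [hC.sup_eq_top]; trivial)
      have h2 := h q hq
      rw [LinearMap.compl₂_apply] at h2
      rw [hsa, map_add, LinearMap.mem_ker.1 hp, zero_add, h2]
    have : v ∈ LinearMap.ker x ⊓ C := ⟨h1, hv⟩
    rwa [hC.inf_eq_bot, Submodule.mem_bot] at this
  have hDnd : ∀ v ∈ D, (∀ w ∈ D, B v w = 0) → v = 0 := by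
    intro v hv h
    have h1 : v ∈ perp B (LinearMap.ker x) := by
      intro w hw
      rw [← hDs] at hw
      obtain ⟨p, ⟨p, rfl⟩, q, hq, rfl⟩ := Submodule.mem_sup.1 hw
      rw [map_add, hkr v (hDk hv), h q hq, add_zero]
    rw [hperp] at h1
    have : v ∈ D ⊓ LinearMap.range x := ⟨hv, h1⟩
    rwa [hDr, Submodule.mem_bot] at this
  obtain ⟨e, f, -, -, hee, hff, hef⟩ := aux_hyperbolic (B.compl₂ x)
    (fun v w => by simp only [LinearMap.compl₂_apply]; rw [← hsa, hskew]) C hCnd (a + b) (by omega)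
  obtain ⟨d, d', hdD, hdD', hdd, -, hdd'⟩ := aux_hyperbolic B hskew D hDnd c (by omega)
  simp only [LinearMap.compl₂_apply] at hee hff hef
  have hfe : ∀ i j, B (f i) (x (e j)) = if i = j then -1 else 0 := by
    intro i j
    rw [← hsa, hskew (e j), hef]
    by_cases h : i = j
    · simp [h]
    · simp [h, Ne.symm h]
  have hdd'' : ∀ i j, B (d' i) (d j) = if i = j then -1 else 0 := by
    intro i j
    rw [hskew (d j), hdd']
    by_cases h : i = j
    · simp [h]
    · simp [h, Ne.symm h]
  -- families
  let r : Fin a → V := fun i => x (e (Fin.castAdd b i))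
  let g : Fin a ⊕ (Fin b ⊕ Fin b) → V := Sum.elim r
    (Sum.elim (fun i => x (e (Fin.natAdd a i))) (fun i => x (f (Fin.natAdd a i))))
  let φ : Fin a ⊕ (Fin b ⊕ Fin b) → V →ₗ[ℂ] ℂ := Sum.elim (fun i => B.flip (f (Fin.castAdd b i)))
    (Sum.elim (fun i => B.flip (f (Fin.natAdd a i))) (fun i => -B.flip (e (Fin.natAdd a i))))
  have hne : ∀ (i : Fin a) (j : Fin b), Fin.castAdd b i ≠ Fin.natAdd a j := by
    intro i j h
    have := congrArg Fin.val h
    simp at this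
    omega
  have hgφ : ∀ i j, φ j (g i) = if i = j then 1 else 0 := by
    rintro (i | i | i) (j | j | j) <;>
      simp [g, φ, r, hsa, hee, hff, hef, hfe, hne, (hne _ _).symm]
    split_ifs <;> simp
  have hgli : LinearIndependent ℂ g := aux_linInd g φ hgφ
  have hrli : LinearIndependent ℂ r := hgli.comp Sum.inl Sum.inl_injective
  have hdli : LinearIndependent ℂ d := aux_linInd d (fun i => B.flip (d' i)) (by simpa using hdd')
  have hgr : ∀ i, ∃ w, x w = g i := by
    rintro (i | i | i)
    exacts [⟨_, rfl⟩, ⟨_, rfl⟩, ⟨_, rfl⟩]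
  set G := span ℂ (Set.range g) with hG
  set P := span ℂ (Set.range d) with hP
  have hGr : G ≤ LinearMap.range x := by
    refine span_le.2 ?_
    rintro _ ⟨i, rfl⟩
    exact hgr i
  have hPD : P ≤ D := by
    refine span_le.2 ?_
    rintro _ ⟨i, rfl⟩
    exact hdD i
  have hPr : P ⊓ LinearMap.range x = ⊥ := by
    rw [eq_bot_iff, ← hDr]
    exact inf_le_inf_right _ hPD
  have hGP : G ⊓ P = ⊥ := by
    rw [eq_bot_iff, ← hPr, inf_comm]
    exact inf_le_inf_left _ hGr
  have hFr : (G ⊔ P) ⊓ LinearMap.range x = G := by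
    rw [sup_inf_assoc_of_le _ hGr, hPr, sup_bot_eq]
  have hGdim : finrank ℂ G = a + (b + b) := by
    rw [hG, finrank_span_eq_card hgli]; simp
  have hPdim : finrank ℂ P = c := by
    rw [hP, finrank_span_eq_card hdli]; simp
  have hFspan : G ⊔ P = span ℂ (Set.range g ∪ Set.range d) := by
    rw [Submodule.span_union]
  have hFk : G ⊔ P ≤ LinearMap.ker x := sup_le (hGr.trans hrk) (hPD.trans hDk)
  have hperpF : ∀ v, (∀ i, B v (g i) = 0) → (∀ i, B v (d i) = 0) → v ∈ perp B (G ⊔ P) := by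
    intro v h1 h2
    rw [hFspan]
    apply aux_mem_perp_span
    rintro _ (⟨i, rfl⟩ | ⟨i, rfl⟩)
    exacts [h1 i, h2 i]
  have hkg : ∀ v ∈ LinearMap.ker x, ∀ i, B v (g i) = 0 := by
    intro v hv i
    obtain ⟨w, hw⟩ := hgr i
    rw [← hw, hkr v hv]
  refine ⟨G ⊔ P, hFk, ?_, ?_, ?_, ?_⟩
  · refine sup_le (span_le.2 ?_) (span_le.2 ?_)
    · rintro _ ⟨i, rfl⟩
      have hk : g i ∈ LinearMap.ker x := hrk (hGr (subset_span ⟨i, rfl⟩))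
      refine hperpF _ (hkg _ hk) fun j => ?_
      rw [hskew (d j), hkg _ (hDk (hdD j)), neg_zero]
    · rintro _ ⟨i, rfl⟩
      exact hperpF _ (hkg _ (hDk (hdD i))) fun j => hdd i j
  · have := Submodule.finrank_sup_add_finrank_inf_eq G P
    rw [hGP, finrank_bot] at this
    omega
  · rw [hFr, hGdim]
  · have hR : (G ⊔ P) ⊓ (perp B (G ⊔ P)).map x = span ℂ (Set.range r) := by
      apply le_antisymm
      · rintro _ ⟨hyF, v, hv, rfl⟩
        have hyG : x v ∈ G := by rw [← hFr]; exact ⟨hyF, v, rfl⟩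
        obtain ⟨t, ht⟩ := (Submodule.mem_span_range_iff_exists_fun ℂ).1 hyG
        have hvg : ∀ i, B v (g i) = 0 := fun i =>
          hv _ (Submodule.mem_sup_left (subset_span ⟨i, rfl⟩))
        have hcoef : ∀ i, φ i (x v) = t i := by
          intro i
          rw [← ht]
          simp [map_sum, hgφ, -Fintype.sum_sum_type]
        have h1 : ∀ i, t (Sum.inr (Sum.inl i)) = 0 := by
          intro i
          rw [← hcoef]
          have := hvg (Sum.inr (Sum.inr i))
          simpa [g, φ, hsa] using this
        have h2 : ∀ i, t (Sum.inr (Sum.inr i)) = 0 := by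
          intro i
          rw [← hcoef]
          have := hvg (Sum.inr (Sum.inl i))
          simpa [g, φ, hsa] using this
        rw [← ht]
        simp only [Fintype.sum_sum_type, h1, h2, zero_smul, Finset.sum_const_zero, add_zero]
        exact Submodule.sum_mem _ fun i _ => Submodule.smul_mem _ _ (subset_span ⟨i, rfl⟩)
      · refine span_le.2 ?_
        rintro _ ⟨i, rfl⟩
        refine ⟨Submodule.mem_sup_left (subset_span ⟨Sum.inl i, rfl⟩), ?_⟩
        let κ : V := ∑ j, B (e (Fin.castAdd b i)) (d j) • d' j
        have hκ : κ ∈ LinearMap.ker x :=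
          Submodule.sum_mem _ fun j _ => Submodule.smul_mem _ _ (hDk (hdD' j))
        refine ⟨e (Fin.castAdd b i) + κ, hperpF _ ?_ ?_, ?_⟩
        · intro j
          rw [map_add, LinearMap.add_apply, hkg κ hκ, add_zero]
          rcases j with (j | j | j) <;> simp [g, r, hee, hef, hne]
        · intro j
          simp [κ, map_sum, LinearMap.sum_apply, hdd'']
        · rw [map_add, LinearMap.mem_ker.1 hκ, add_zero]
    rw [hR, finrank_span_eq_card hrli]; simp

/-- for self-adjoint x with x² = 0 of Jordan type (2^{2n₂} 1^{2n₁}) on a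
2n-dimensional symplectic space and 0 ≤ k ≤ n₁ + 2n₂, the set X(k₂,h) of k-dimensional
isotropic subspaces F of ker x with dim(F ∩ Im x) = k₂ and dim(F ∩ x(F^⊥)) = k₂ − 2h is
nonempty iff max{0, k−n₁} ≤ k₂ ≤ min{k, 2n₂} and max{0, k₂−n₂} ≤ h ≤ k₂/2. -/
theorem stmt15 (V : Type*) [AddCommGroup V] [Module ℂ V] [FiniteDimensional ℂ V]
    (B : V →ₗ[ℂ] V →ₗ[ℂ] ℂ) (hskew : ∀ v w : V, B w v = - B v w)
    (hnondeg : ∀ v : V, (∀ w : V, B v w = 0) → v = 0)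
    (x : V →ₗ[ℂ] V) (hsa : ∀ v w : V, B (x v) w = B v (x w)) (hx2 : x ∘ₗ x = 0)
    (n n₁ n₂ : ℕ) (hdim : finrank ℂ V = 2 * n) (hn : n = 2 * n₂ + n₁)
    (hrank : finrank ℂ ↥(LinearMap.range x) = 2 * n₂)
    (k k₂ h : ℕ) (hk : k ≤ n₁ + 2 * n₂) :
    {F : Submodule ℂ V | F ≤ LinearMap.ker x ∧ F ≤ perp B F ∧ finrank ℂ F = k ∧
        finrank ℂ ↥(F ⊓ LinearMap.range x) = k₂ ∧
        finrank ℂ ↥(F ⊓ (perp B F).map x) + 2 * h = k₂}.Nonempty ↔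
      (k ≤ k₂ + n₁ ∧ k₂ ≤ k ∧ k₂ ≤ 2 * n₂ ∧ k₂ ≤ n₂ + h ∧ 2 * h ≤ k₂) := by
  have hx : ∀ v, x (x v) = 0 := fun v => by
    have := LinearMap.congr_fun hx2 v
    simpa using this
  constructor
  · rintro ⟨F, hF, hiso, h1, h2, h3⟩
    obtain ⟨h4, h5⟩ := aux_necessary V B hskew hnondeg x hsa hx F hF hiso
    have h6 := Submodule.finrank_mono (inf_le_left : F ⊓ LinearMap.range x ≤ F)
    have h7 := Submodule.finrank_mono (inf_le_right : F ⊓ LinearMap.range x ≤ LinearMap.range x)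
    refine ⟨?_, ?_, ?_, ?_, ?_⟩ <;> omega
  · rintro ⟨h1, h2, h3, h4, h5⟩
    obtain ⟨F, hF, hiso, h6, h7, h8⟩ := aux_sufficient V B hskew hnondeg x hsa hx
      (k₂ - 2 * h) h (k - k₂) (by omega) (by omega)
    exact ⟨F, hF, hiso, by omega, by omega, by omega⟩
end

section
/- Let V be a 2n-dimensional symplectic space, x self-adjoint with x² = 0, v ∉ ker(x), and F ⊆ ker(x) ∩ (ℂ[x]v)^⊥ an isotropic subspace with xv ∉ F. Then (F + ℂxv + ℂv) ∩ x(F^⊥) = ((F + ℂv) ∩ x(F^⊥)) + ℂxv, and consequently dim((F + ℂ[x]v) ∩ x(F^⊥)) = dim(F ∩ x(F^⊥)) + 1. -/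
open Module Submodule LinearMap

/-- for self-adjoint x with x² = 0, v ∉ ker x, and F ⊆ ker x ∩ (ℂ[x]v)^⊥
an isotropic subspace with xv ∉ F (here ℂ[x]v = span{v, xv}):
(F + ℂxv + ℂv) ∩ x(F^⊥) = ((F + ℂv) ∩ x(F^⊥)) + ℂxv, and consequently
dim((F + ℂ[x]v) ∩ x(F^⊥)) = dim(F ∩ x(F^⊥)) + 1. -/
theorem stmt19 (V : Type*) [AddCommGroup V] [Module ℂ V] [FiniteDimensional ℂ V]
    (n : ℕ) (hdim : finrank ℂ V = 2 * n)
    (B : V →ₗ[ℂ] V →ₗ[ℂ] ℂ) (hskew : ∀ v w : V, B w v = - B v w)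
    (hnondeg : ∀ v : V, (∀ w : V, B v w = 0) → v = 0)
    (x : V →ₗ[ℂ] V) (hsa : ∀ v w : V, B (x v) w = B v (x w)) (hx2 : x ∘ₗ x = 0)
    (v : V) (hv : v ∉ LinearMap.ker x)
    (F : Submodule ℂ V) (hiso : F ≤ perp B F) (hFker : F ≤ LinearMap.ker x)
    (hFperp : F ≤ perp B (Submodule.span ℂ {v, x v})) (hxv : x v ∉ F) :
    (F ⊔ Submodule.span ℂ {x v} ⊔ Submodule.span ℂ {v}) ⊓ (perp B F).map x =
      ((F ⊔ Submodule.span ℂ {v}) ⊓ (perp B F).map x) ⊔ Submodule.span ℂ {x v} ∧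
    finrank ℂ ↥((F ⊔ Submodule.span ℂ {v, x v}) ⊓ (perp B F).map x) =
      finrank ℂ ↥(F ⊓ (perp B F).map x) + 1 := by
  have hvF : v ∈ perp B F := by
    intro w hw
    rw [hskew w v, hFperp hw v (Submodule.subset_span (by simp)), neg_zero]
  have hxM : x v ∈ (perp B F).map x := Submodule.mem_map_of_mem hvF
  have hle : Submodule.span ℂ {x v} ≤ (perp B F).map x := by
    rw [Submodule.span_singleton_le_iff_mem]; exact hxM
  have hMker : (perp B F).map x ≤ LinearMap.ker x := by
    rintro _ ⟨u, _, rfl⟩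
    exact LinearMap.congr_fun hx2 u
  have h1 : (F ⊔ Submodule.span ℂ {x v} ⊔ Submodule.span ℂ {v}) ⊓ (perp B F).map x =
      ((F ⊔ Submodule.span ℂ {v}) ⊓ (perp B F).map x) ⊔ Submodule.span ℂ {x v} := by
    rw [sup_right_comm, sup_comm _ (Submodule.span ℂ {x v}), sup_inf_assoc_of_le _ hle, sup_comm]
  refine ⟨h1, ?_⟩
  have h2 : (F ⊔ Submodule.span ℂ {v}) ⊓ (perp B F).map x = F ⊓ (perp B F).map x := by
    apply le_antisymm
    · rintro y ⟨hy, hyM⟩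
      refine ⟨?_, hyM⟩
      obtain ⟨f, hf, z, hz, rfl⟩ := Submodule.mem_sup.1 hy
      obtain ⟨c, rfl⟩ := Submodule.mem_span_singleton.1 hz
      have h3 : x (f + c • v) = 0 := hMker hyM
      have h4 : x f = 0 := hFker hf
      rw [map_add, h4, zero_add, map_smul, smul_eq_zero] at h3
      rcases h3 with h3 | h3
      · simpa [h3] using hf
      · exact absurd h3 hv
    · exact inf_le_inf_right _ le_sup_left
  have h5 : F ⊔ Submodule.span ℂ {v, x v} =
      F ⊔ Submodule.span ℂ {x v} ⊔ Submodule.span ℂ {v} := by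
    rw [Submodule.span_insert, sup_assoc, sup_comm (Submodule.span ℂ {v})]
  rw [h5, h1, h2]
  have hne : x v ≠ 0 := fun h => hv h
  have h6 : (F ⊓ (perp B F).map x) ⊓ Submodule.span ℂ {x v} = ⊥ := by
    rw [← disjoint_iff, Submodule.disjoint_span_singleton' hne]
    exact fun h => hxv h.1
  have h7 := Submodule.finrank_sup_add_finrank_inf_eq (F ⊓ (perp B F).map x)
    (Submodule.span ℂ {x v})
  rw [h6, finrank_bot, finrank_span_singleton hne] at h7
  simpa using h7
end
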